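/- arXiv:2003.10523 — 3 statements merged into one kernel-verified Lean document; each statement's English description precedes it below -/
import Mathlib

section
/- Let d, k ∈ ℕ with d ≥ 4, let X_1,…,X_d be i.i.d. random variables from a non-constant distribution P supported in [-1,1], let C be the (d,k)-multiplicities set, 𝒳 = (X_α)_{α∈C} the column vector of monomials, and Σ = E[𝒳 𝒳ᵀ]. Then the condition number satisfies κ(Σ) = λ_max(Σ)/λ_min(Σ) ≤ C(P,k) · d^{3k}, where C(P,k) = f(P,k)/c(P,k) is a constant independent of d. -/
open MeasureTheory Polynomial Matrix
open scoped Classical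

noncomputable section

/-- One layer of a neural network: apply the weight matrix, then the activation
coordinatewise. -/
def applyLayer (σ : ℝ → ℝ) {m n : ℕ} (W : Matrix (Fin m) (Fin n) ℝ) (v : Fin n → ℝ) :
    Fin m → ℝ :=
  fun j => σ (∑ i, W j i * v i)

/-- Iterated application of `n` square hidden layers. -/
def iterLayers (σ : ℝ → ℝ) {m : ℕ} :
    (n : ℕ) → (Fin n → Matrix (Fin m) (Fin m) ℝ) → (Fin m → ℝ) → (Fin m → ℝ)
  | 0, _, v => v
  | n + 1, W, v => applyLayer σ (W (Fin.last n)) (iterLayers σ n (fun i => W i.castSucc) v)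

/-- Output of a neural network of depth `n+1` (one rectangular layer `W1` followed by
`n` square layers `Ws` and output weights `a`):
`f(W,x) = aᵀ σ(W_{n+1} σ( ⋯ σ(W_1 x) ⋯ ))`. -/
def nnFun (σ : ℝ → ℝ) {d m n : ℕ} (a : Fin m → ℝ)
    (W1 : Matrix (Fin m) (Fin d) ℝ) (Ws : Fin n → Matrix (Fin m) (Fin m) ℝ)
    (x : Fin d → ℝ) : ℝ :=
  ∑ j, a j * iterLayers σ n Ws (applyLayer σ W1 x) j

/-- The monomial `x_α = ∏ i, (x i) ^ (α i)`. -/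
def monom {d : ℕ} (α : Fin d → ℕ) (x : Fin d → ℝ) : ℝ := ∏ i, x i ^ α i

/-- Topological support of a measure on `ℝ`. -/
def measSupport (P : Measure ℝ) : Set ℝ := {x | ∀ U ∈ nhds x, P U ≠ 0}

/-- `ω(P,t) = min(|Support(P)| − 1, t)`, equal to `t` when the support is infinite. -/
def omegaP (P : Measure ℝ) (t : ℕ) : ℕ :=
  if (measSupport P).Finite then min ((measSupport P).ncard - 1) t else t

/-- `M' = min(M, d·(|Support(P)| − 1))`, equal to `M` when the support is infinite. -/
def capM (P : Measure ℝ) (d M : ℕ) : ℕ :=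
  if (measSupport P).Finite then min M (d * ((measSupport P).ncard - 1)) else M

/-- `F_{s,t}`: multi-indices `α ∈ ℕ^d` with all entries `≤ s` and total degree `t`. -/
def Fst (d s t : ℕ) : Finset (Fin d → ℕ) :=
  (Fintype.piFinset fun _ : Fin d => Finset.range (s + 1)).filter fun α => ∑ i, α i = t

/-- The `(d,M)`-multiplicities set `C = ∪_{t=0}^{M'} F_{ω(P,M),t}`. -/
def multSet (P : Measure ℝ) (d M : ℕ) : Finset (Fin d → ℕ) :=
  (Fintype.piFinset fun _ : Fin d => Finset.range (omegaP P M + 1)).filter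
    fun α => ∑ i, α i ≤ capM P d M

/-- `n`-th moment `c_n = E[X^n]` of `P`. -/
def momentP (P : Measure ℝ) (n : ℕ) : ℝ := ∫ x, x ^ n ∂P

/-- Hankel determinant `D_n = det((c_{i+j})_{0 ≤ i,j ≤ n})` of moments of `P`. -/
def Dn (P : Measure ℝ) (n : ℕ) : ℝ :=
  Matrix.det (Matrix.of fun i j : Fin (n + 1) => momentP P ((i : ℕ) + (j : ℕ)))

/-- `c(P,k) = min(min_{1 ≤ i ≤ ω(P,k)} (D_i/D_{i−1})^{k/2}, 1)`. -/
def cPk (P : Measure ℝ) (k : ℕ) : ℝ :=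
  sInf (insert (1 : ℝ)
    ((fun i => (Dn P i / Dn P (i - 1)) ^ ((k : ℝ) / 2)) '' Set.Icc 1 (omegaP P k)))

/-- `max(max_{1 ≤ i ≤ ω(P,k)} (D_i/D_{i−1})^{k/2}, 1)`. -/
def cPkMax (P : Measure ℝ) (k : ℕ) : ℝ :=
  sSup (insert (1 : ℝ)
    ((fun i => (Dn P i / Dn P (i - 1)) ^ ((k : ℝ) / 2)) '' Set.Icc 1 (omegaP P k)))

/-- `max(max_{1 ≤ i ≤ ω(P,k)} (D_i/D_{i−1})^k, 1)`. -/
def ratioMaxK (P : Measure ℝ) (k : ℕ) : ℝ :=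
  sSup (insert (1 : ℝ)
    ((fun i => (Dn P i / Dn P (i - 1)) ^ k) '' Set.Icc 1 (omegaP P k)))

/-- `min(min_{1 ≤ i ≤ ω(P,k)} (D_i/D_{i−1})^k, 1)`. -/
def ratioMinK (P : Measure ℝ) (k : ℕ) : ℝ :=
  sInf (insert (1 : ℝ)
    ((fun i => (Dn P i / Dn P (i - 1)) ^ k) '' Set.Icc 1 (omegaP P k)))

/-- `f(P,k) = max(c_{2ω(P,k)}^k, 1) · max(max_i (D_i/D_{i−1})^k, 1) / min(min_i (D_i/D_{i−1})^k, 1)`. -/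
def fPk (P : Measure ℝ) (k : ℕ) : ℝ :=
  max (momentP P (2 * omegaP P k) ^ k) 1 * ratioMaxK P k / ratioMinK P k

/-- `C(P,k) = f(P,k)/c(P,k)`. -/
def CPk (P : Measure ℝ) (k : ℕ) : ℝ := fPk P k / cPk P k

/-- An admissible distribution: a non-constant probability measure supported in `[-1,1]`. -/
def AdmissibleDist (P : Measure ℝ) : Prop :=
  IsProbabilityMeasure P ∧ P (Set.Icc (-1 : ℝ) 1) = 1 ∧ ∀ c : ℝ, P {c} < 1

/-- The product measure `P^{⊗d}` on `ℝ^d`. -/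
def piP (P : Measure ℝ) (d : ℕ) : Measure (Fin d → ℝ) := Measure.pi fun _ => P

/-- The joint law of `N` i.i.d. samples from `P^{⊗d}`. -/
def samples (P : Measure ℝ) (d N : ℕ) : Measure (Fin N → Fin d → ℝ) :=
  Measure.pi fun _ => piP P d

/-- Order of polynomial approximation of `σ` on `[-1,1]`: the least degree `r` for which
some real polynomial of degree `r` is uniformly within `ε` of `σ` on `[-1,1]`. -/
def approxOrder (σ : ℝ → ℝ) (ε : ℝ) : ℕ :=
  sInf {r : ℕ | ∃ p : Polynomial ℝ, p.natDegree = r ∧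
    ∀ x ∈ Set.Icc (-1 : ℝ) 1, |p.eval x - σ x| ≤ ε}

/-- An admissible activation function. -/
def AdmissibleActivation (σ : ℝ → ℝ) : Prop :=
  (∀ ε : ℝ, 0 < ε → ∃ p : Polynomial ℝ,
      ∀ x ∈ Set.Icc (-1 : ℝ) 1, |p.eval x - σ x| ≤ ε) ∧
  (∀ ε : ℝ, 0 < ε → ∃ p : Polynomial ℝ, p.natDegree = approxOrder σ ε ∧
      (∀ x ∈ Set.Icc (-1 : ℝ) 1, |p.eval x - σ x| ≤ ε) ∧
      ∀ x ∈ Set.Icc (-1 : ℝ) 1, p.eval x ∈ Set.Icc (0 : ℝ) 1) ∧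
  LipschitzOnWith 1 σ (Set.Icc (-1) 1) ∧
  ∀ x ∈ Set.Icc (-1 : ℝ) 1, |σ x| ≤ 1

/-- Quadratic form `vᵀ A v`. -/
def quadForm {n : Type*} [Fintype n] (A : Matrix n n ℝ) (v : n → ℝ) : ℝ :=
  ∑ i, ∑ j, v i * A i j * v j

/-- Smallest eigenvalue of a symmetric matrix (Rayleigh characterization). -/
def lamMin {n : Type*} [Fintype n] (A : Matrix n n ℝ) : ℝ :=
  sInf {r : ℝ | ∃ v : n → ℝ, ∑ i, v i ^ 2 = 1 ∧ r = quadForm A v}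

/-- Largest eigenvalue of a symmetric matrix (Rayleigh characterization). -/
def lamMax {n : Type*} [Fintype n] (A : Matrix n n ℝ) : ℝ :=
  sSup {r : ℝ | ∃ v : n → ℝ, ∑ i, v i ^ 2 = 1 ∧ r = quadForm A v}

/-- Smallest singular value. -/
def sigMin {n : Type*} [Fintype n] (A : Matrix n n ℝ) : ℝ :=
  Real.sqrt (lamMin (Aᵀ * A))

/-- Largest singular value. -/
def sigMax {n : Type*} [Fintype n] (A : Matrix n n ℝ) : ℝ :=
  Real.sqrt (lamMax (Aᵀ * A))

/-- The covariance matrix `Σ = E[𝒳 𝒳ᵀ]` of the monomials indexed by the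
`(d,k)`-multiplicities set, for input `X ∼ P^{⊗d}`. -/
def covMat (P : Measure ℝ) (d k : ℕ) :
    Matrix {α // α ∈ multSet P d k} {α // α ∈ multSet P d k} ℝ :=
  Matrix.of fun a b => ∫ x, monom a.1 x * monom b.1 x ∂(piP P d)


lemma aux_T (w : ℕ → ℝ) (c : ℝ) (hc : 0 ≤ c) (hw0 : w 0 = 1) (hwn : ∀ n, 0 ≤ w n)
    (hw : ∀ n : ℕ, ((n:ℝ)+1) * w (n+1) ≤ c * (2*n+1) * w n) (d : ℕ) (hd : 2 ≤ d) (t : ℕ) :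
    ∑ α ∈ Finset.piAntidiag (Finset.univ : Finset (Fin d)) t, ∏ i, w (α i) ≤ (c * d)^t := by
  induction t with
  | zero => simp [hw0]
  | succ t ih =>
    have key : ∀ i : Fin d, ∑ α ∈ Finset.piAntidiag (Finset.univ : Finset (Fin d)) (t+1),
        (α i : ℝ) * ∏ j, w (α j) ≤ ∑ β ∈ Finset.piAntidiag (Finset.univ : Finset (Fin d)) t,
        (c * (2 * β i + 1)) * ∏ j, w (β j) := by
      intro i
      have h1 : ∑ α ∈ Finset.piAntidiag (Finset.univ : Finset (Fin d)) (t+1),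
        (α i : ℝ) * ∏ j, w (α j) = ∑ α ∈ (Finset.piAntidiag (Finset.univ : Finset (Fin d)) (t+1)).filter (fun α => α i ≠ 0),
        (α i : ℝ) * ∏ j, w (α j) := by
        rw [Finset.sum_filter]
        apply Finset.sum_congr rfl
        intro α _
        split_ifs with h
        · rfl
        · simp at h; simp [h]
      have h2 : ∑ α ∈ (Finset.piAntidiag (Finset.univ : Finset (Fin d)) (t+1)).filter (fun α => α i ≠ 0),
        (α i : ℝ) * ∏ j, w (α j) = ∑ β ∈ Finset.piAntidiag (Finset.univ : Finset (Fin d)) t,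
          ((β i : ℝ) + 1) * ∏ j, w (Function.update β i (β i + 1) j) := by
        refine Finset.sum_nbij' (fun α => Function.update α i (α i - 1)) (fun β => Function.update β i (β i + 1)) ?_ ?_ ?_ ?_ ?_
        · intro α hα
          simp only [Finset.mem_filter, Finset.mem_piAntidiag] at hα ⊢
          refine ⟨?_, by simp⟩
          have h3 := hα.1.1
          rw [← Finset.add_sum_erase _ _ (Finset.mem_univ i)] at h3
          rw [← Finset.add_sum_erase _ _ (Finset.mem_univ i)]
          rw [Finset.sum_congr rfl (g := α) (fun j hj => by rw [Function.update_of_ne (Finset.ne_of_mem_erase hj)])]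
          simp only [Function.update_self]
          replace h3 : α i + (Finset.univ.erase i).sum α = t + 1 := h3
          omega
        · intro α hα
          simp only [Finset.mem_filter, Finset.mem_piAntidiag] at hα ⊢
          refine ⟨⟨?_, by simp⟩, by simp⟩
          have h3 := hα.1
          rw [← Finset.add_sum_erase _ _ (Finset.mem_univ i)] at h3
          rw [← Finset.add_sum_erase _ _ (Finset.mem_univ i)]
          rw [Finset.sum_congr rfl (g := α) (fun j hj => by rw [Function.update_of_ne (Finset.ne_of_mem_erase hj)])]
          simp only [Function.update_self]
          replace h3 : α i + (Finset.univ.erase i).sum α = t := h3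
          omega
        · intro α hα
          simp only [Finset.mem_filter] at hα
          have : α i - 1 + 1 = α i := by omega
          simp [this]
        · intro α hα
          simp
        · intro α hα
          simp only [Finset.mem_filter] at hα
          have : α i - 1 + 1 = α i := by omega
          have h5 : ((α i - 1 : ℕ) : ℝ) + 1 = α i := by exact_mod_cast this
          simp [this, h5]
      rw [h1, h2]
      apply Finset.sum_le_sum
      intro β _
      rw [← Finset.mul_prod_erase _ _ (Finset.mem_univ i), ← Finset.mul_prod_erase Finset.univ (fun j => w (β j)) (Finset.mem_univ i)]
      rw [Finset.prod_congr rfl (g := fun j => w (β j)) (fun j hj => by rw [Function.update_of_ne (Finset.ne_of_mem_erase hj)])]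
      simp only [Function.update_self]
      rw [← mul_assoc, ← mul_assoc]
      exact mul_le_mul_of_nonneg_right (hw _) (Finset.prod_nonneg fun j _ => hwn _)
    have h3 : ((t:ℝ)+1) * ∑ α ∈ Finset.piAntidiag (Finset.univ : Finset (Fin d)) (t+1), ∏ i, w (α i)
        = ∑ i : Fin d, ∑ α ∈ Finset.piAntidiag (Finset.univ : Finset (Fin d)) (t+1),
        (α i : ℝ) * ∏ j, w (α j) := by
      rw [Finset.sum_comm, Finset.mul_sum]
      apply Finset.sum_congr rfl
      intro α hα
      rw [← Finset.sum_mul]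
      congr 1
      simp only [Finset.mem_piAntidiag] at hα
      exact_mod_cast hα.1.symm
    have h4 : ∑ i : Fin d, ∑ β ∈ Finset.piAntidiag (Finset.univ : Finset (Fin d)) t,
        (c * (2 * β i + 1)) * ∏ j, w (β j) = c * (2 * t + d) * ∑ β ∈ Finset.piAntidiag (Finset.univ : Finset (Fin d)) t, ∏ j, w (β j) := by
      rw [Finset.sum_comm, Finset.mul_sum]
      apply Finset.sum_congr rfl
      intro α hα
      rw [← Finset.sum_mul, ← Finset.mul_sum, Finset.sum_add_distrib, ← Finset.mul_sum]
      simp only [Finset.mem_piAntidiag] at hα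
      have : (∑ i, (α i:ℝ)) = t := by exact_mod_cast hα.1
      rw [this]; simp
    have h5 := Finset.sum_le_sum (fun i (_ : i ∈ (Finset.univ : Finset (Fin d))) => key i)
    rw [← h3, h4] at h5
    have hd' : (2:ℝ) ≤ d := by exact_mod_cast hd
    have ht : (0:ℝ) ≤ t := by positivity
    set T := ∑ β ∈ Finset.piAntidiag (Finset.univ : Finset (Fin d)) t, ∏ j, w (β j) with hT
    have hT0 : 0 ≤ T := Finset.sum_nonneg fun _ _ => Finset.prod_nonneg fun _ _ => hwn _
    have h6 : c * (2 * t + d) * T ≤ (t+1) * ((c * d) * T) := by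
      have : c * (2*t+d) ≤ (t+1) * (c*d) := by
        have : (2*t+d : ℝ) ≤ (t+1)*d := by nlinarith
        nlinarith
      calc _ ≤ _ := mul_le_mul_of_nonneg_right this hT0
        _ = _ := by ring
    have h7 := le_of_mul_le_mul_left (h5.trans h6) (by positivity)
    calc _ ≤ _ := h7
      _ ≤ (c*d) * (c*d)^t := by gcongr
      _ = _ := by ring

lemma aux_S (w : ℕ → ℝ) (c : ℝ) (hc : 0 ≤ c) (hw0 : w 0 = 1) (hwn : ∀ n, 0 ≤ w n)
    (hw : ∀ n : ℕ, ((n:ℝ)+1) * w (n+1) ≤ c * (2*n+1) * w n) (d : ℕ) (hd : 2 ≤ d) (k : ℕ)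
    (S : Finset (Fin d → ℕ)) (hS : ∀ α ∈ S, ∑ i, α i ≤ k) :
    ∑ α ∈ S, ∏ i, w (α i) ≤ (1 + c * d)^k := by
  have h1 : ∑ α ∈ S, ∏ i, w (α i) ≤ ∑ t ∈ Finset.range (k+1), (c*d)^t := by
    calc _ ≤ ∑ α ∈ (Finset.range (k+1)).biUnion (fun t => Finset.piAntidiag (Finset.univ : Finset (Fin d)) t), ∏ i, w (α i) := by
          apply Finset.sum_le_sum_of_subset_of_nonneg
          · intro α hα
            simp only [Finset.mem_biUnion, Finset.mem_range, Finset.mem_piAntidiag]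
            exact ⟨_, Nat.lt_succ_of_le (hS α hα), rfl, by simp⟩
          · intro _ _ _
            exact Finset.prod_nonneg fun _ _ => hwn _
      _ = ∑ t ∈ Finset.range (k+1), ∑ α ∈ Finset.piAntidiag (Finset.univ : Finset (Fin d)) t, ∏ i, w (α i) := by
          apply Finset.sum_biUnion
          intro s _ t _ hst
          rw [Function.onFun, Finset.disjoint_left]
          intro α h1 h2
          simp only [Finset.mem_piAntidiag] at h1 h2
          exact hst (h1.1.symm.trans h2.1)
      _ ≤ _ := Finset.sum_le_sum fun t _ => aux_T w c hc hw0 hwn hw d hd t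
  refine h1.trans ?_
  have hx : 0 ≤ c * d := by positivity
  generalize c * (d:ℝ) = x at hx
  clear h1 hS
  induction k with
  | zero => simp
  | succ k ih =>
    rw [Finset.sum_range_succ]
    have : x^k ≤ (1+x)^k := by gcongr; linarith
    calc _ ≤ (1+x)^k + x * (1+x)^k := by
          rw [pow_succ' x]; gcongr
      _ = _ := by ring

lemma exists_orth (L : ℝ[X] →ₗ[ℝ] ℝ) (n : ℕ)
    (hpos : ∀ p : ℝ[X], p ≠ 0 → p.degree < n → 0 < L (p * p)) :
    ∃ q : ℝ[X], q.Monic ∧ q.natDegree = n ∧ ∀ p : ℝ[X], p.degree < n → L (q * p) = 0 := by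
  let B : ℝ[X] →ₗ[ℝ] ℝ[X] →ₗ[ℝ] ℝ := (LinearMap.mul ℝ ℝ[X]).compr₂ L
  let T : degreeLT ℝ n →ₗ[ℝ] Module.Dual ℝ (degreeLT ℝ n) :=
    B.domRestrict₁₂ (degreeLT ℝ n) (degreeLT ℝ n)
  have hT : ∀ p q, T p q = L (p.1 * q.1) := fun p q => rfl
  have : FiniteDimensional ℝ (degreeLT ℝ n) :=
    Module.Finite.equiv (degreeLTEquiv ℝ n).symm
  have hinj : Function.Injective T := by
    rw [injective_iff_map_eq_zero]
    intro p hp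
    by_contra hne
    have h1 := hpos p.1 (by simpa using hne) (mem_degreeLT.1 p.2)
    rw [← hT, hp] at h1
    simp at h1
  have hsurj := (LinearMap.injective_iff_surjective_of_finrank_eq_finrank
    (Subspace.dual_finrank_eq (K := ℝ) (V := degreeLT ℝ n)).symm).1 hinj
  obtain ⟨p, hp⟩ := hsurj ((B (X ^ n)).comp (degreeLT ℝ n).subtype)
  have hpd : p.1.degree < n := mem_degreeLT.1 p.2
  refine ⟨X ^ n - p.1, monic_X_pow_sub hpd, ?_, ?_⟩
  · apply natDegree_eq_of_degree_eq_some
    rw [degree_sub_eq_left_of_degree_lt] <;> simp [hpd]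
  · intro q hq
    have := congrArg (fun f => f ⟨q, mem_degreeLT.2 hq⟩) hp
    simp only [hT] at this
    have h2 : L (p.1 * q) = L (X ^ n * q) := this
    rw [sub_mul, map_sub, h2, sub_self]

lemma root_bound (L : ℝ[X] →ₗ[ℝ] ℝ) (n : ℕ)
    (hpos : ∀ p : ℝ[X], p ≠ 0 → p.natDegree < n → 0 < L (p * p))
    (hb : ∀ p : ℝ[X], |L (X * (p * p))| ≤ L (p * p))
    (hpos' : ∀ p : ℝ[X], 0 ≤ L (p * p))
    (q : ℝ[X]) (hq : q.Monic) (hqn : q.natDegree = n)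
    (horth : ∀ p : ℝ[X], p.natDegree < n → L (q * p) = 0) (a : ℕ) :
    |q.coeff a| ≤ n.choose a := by
  have hroot : ∀ z ∈ (q.map (algebraMap ℝ ℂ)).roots, ‖z‖ ≤ 1 := by
    intro z hz
    have hz' : aeval z q = 0 := by
      have := (mem_roots'.1 hz).2
      rwa [IsRoot.def, eval_map_algebraMap] at this
    by_cases him : z.im = 0
    · have hzr : z = (z.re : ℂ) := by apply Complex.ext <;> simp [him]
      have hr : q.IsRoot z.re := by
        rw [hzr] at hz'
        have h2 : aeval ((algebraMap ℝ ℂ) z.re) q = 0 := hz'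
        rw [aeval_algebraMap_apply] at h2
        simpa using h2
      obtain ⟨r, hr⟩ := dvd_iff_isRoot.2 hr
      have hr0 : r ≠ 0 := by rintro rfl; simp at hr; exact hq.ne_zero hr
      have hdeg : r.natDegree < n := by
        have := congrArg natDegree hr
        rw [natDegree_mul (X_sub_C_ne_zero _) hr0, natDegree_X_sub_C, hqn] at this
        omega
      have h1 := horth r hdeg
      have h2 : q * r = X * (r * r) - z.re • (r * r) := by
        rw [hr, smul_eq_C_mul]; ring
      rw [h2, map_sub, map_smul, smul_eq_mul, sub_eq_zero] at h1
      have h3 := hb r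
      have h4 := hpos r hr0 hdeg
      rw [h1, abs_mul, abs_of_pos h4] at h3
      rw [hzr, Complex.norm_real]
      exact le_of_mul_le_mul_right (by simpa using h3) h4
    · exfalso
      obtain ⟨r, hr⟩ := q.quadratic_dvd_of_aeval_eq_zero_im_ne_zero hz' him
      have hr0 : r ≠ 0 := by rintro rfl; simp at hr; exact hq.ne_zero hr
      have hdeg : r.natDegree < n := by
        have := congrArg natDegree hr
        have h2 : (X ^ 2 - C (2 * z.re) * X + C (‖z‖ ^ 2)).natDegree = 2 := by
          compute_degree!
        rw [natDegree_mul (by intro h; rw [h] at h2; simp at h2) hr0, h2, hqn] at this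
        omega
      have h1 := horth r hdeg
      have hn : ‖z‖ ^ 2 = z.re ^ 2 + z.im ^ 2 := by
        rw [← Complex.normSq_eq_norm_sq, Complex.normSq_apply]; ring
      have h2 : q * r = ((X - C z.re) * r) * ((X - C z.re) * r) + (z.im ^ 2) • (r * r) := by
        rw [hr, smul_eq_C_mul, hn]; simp only [map_mul, map_add, map_pow, map_ofNat]; ring
      rw [h2, map_add, map_smul, smul_eq_mul] at h1
      have h3 := hpos' ((X - C z.re) * r)
      have h4 := hpos r hr0 hdeg
      have : 0 < z.im ^ 2 := by positivity
      nlinarith [mul_pos this h4]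
  have := coeff_le_of_roots_le (f := algebraMap ℝ ℂ) (B := 1) a hq (IsAlgClosed.splits _) hroot
  rw [coeff_map, hqn] at this
  simpa using this

lemma coeff_sq_sum (q : ℝ[X]) (n m : ℕ) (h : ∀ a, |q.coeff a| ≤ n.choose a) :
    ∑ a ∈ Finset.range m, q.coeff a ^ 2 ≤ (n.centralBinom : ℝ) := by
  have h1 : ∑ a ∈ Finset.range m, q.coeff a ^ 2 ≤ ∑ a ∈ Finset.range m, (n.choose a : ℝ)^2 := by
    apply Finset.sum_le_sum
    intro a _
    rw [← sq_abs]
    have := h a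
    gcongr
  refine h1.trans ?_
  have h2 : ∑ a ∈ Finset.range m, (n.choose a : ℝ)^2 ≤ ∑ a ∈ Finset.range (n+1), (n.choose a : ℝ)^2 := by
    rcases le_total m (n+1) with hm | hm
    · apply Finset.sum_le_sum_of_subset_of_nonneg
      · simpa using hm
      · intros; positivity
    · apply le_of_eq
      symm
      apply Finset.sum_subset
      · simpa using hm
      · intro x _ hx
        simp at hx
        simp [Nat.choose_eq_zero_of_lt (show n < x by omega)]
  refine h2.trans ?_
  have := Nat.sum_range_choose_sq n
  rw [Nat.centralBinom]
  exact_mod_cast this.le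

lemma L_expand (L : ℝ[X] →ₗ[ℝ] ℝ) (n : ℕ) (p q : ℝ[X]) (hp : p.natDegree < n) (hq : q.natDegree < n) :
    L (p * q) = ∑ j : Fin n, ∑ l : Fin n, p.coeff j * L (X ^ ((j:ℕ) + l)) * q.coeff l := by
  conv_lhs => rw [p.as_sum_range_C_mul_X_pow' hp, q.as_sum_range_C_mul_X_pow' hq, 
    Finset.sum_mul_sum, map_sum, Finset.sum_range]
  apply Finset.sum_congr rfl
  intro j _
  rw [map_sum, Finset.sum_range]
  apply Finset.sum_congr rfl
  intro l _
  have : C (p.coeff j) * X ^ (j:ℕ) * (C (q.coeff l) * X ^ (l:ℕ)) = (p.coeff j * q.coeff l) • (X ^ ((j:ℕ)+l) : ℝ[X]) := by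
    rw [smul_eq_C_mul, map_mul, pow_add]; ring
  rw [this, map_smul, smul_eq_mul]; ring


lemma hankel_decomp (L : ℝ[X] →ₗ[ℝ] ℝ) (m : ℕ) (p : ℕ → ℝ[X])
    (hmon : ∀ n ≤ m, (p n).Monic) (hdeg : ∀ n ≤ m, (p n).natDegree = n)
    (horth : ∀ n ≤ m, ∀ q : ℝ[X], q.degree < n → L (p n * q) = 0) (n : ℕ) (hn : n ≤ m) :
    (Matrix.of fun i j : Fin (n+1) => (p i).coeff j) *
      (Matrix.of fun i j : Fin (n+1) => L (X ^ ((i:ℕ) + j))) *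
      (Matrix.of fun i j : Fin (n+1) => (p i).coeff j)ᵀ
      = Matrix.diagonal fun i : Fin (n+1) => L (p i * p i) := by
  have hdeg' : ∀ i ≤ m, (p i).degree = i := fun i hi => by
    rw [degree_eq_natDegree (hmon i hi).ne_zero, hdeg i hi]
  ext i j
  have hi : (i:ℕ) ≤ m := by omega
  have hj : (j:ℕ) ≤ m := by omega
  have h1 : L (p i * p j) = ((Matrix.of fun i j : Fin (n+1) => (p i).coeff j) *
      (Matrix.of fun i j : Fin (n+1) => L (X ^ ((i:ℕ) + j))) *
      (Matrix.of fun i j : Fin (n+1) => (p i).coeff j)ᵀ) i j := by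
    rw [L_expand L (n+1) (p i) (p j) (by rw [hdeg _ hi]; omega) (by rw [hdeg _ hj]; omega)]
    rw [Matrix.mul_apply, Finset.sum_comm]
    apply Finset.sum_congr rfl
    intro l _
    rw [Matrix.mul_apply, Finset.sum_mul]
    rfl
  rw [← h1]
  rcases lt_trichotomy i j with h | h | h
  · rw [Matrix.diagonal_apply_ne _ h.ne, mul_comm]
    apply horth j hj
    rw [hdeg' i hi]; exact_mod_cast h
  · subst h; simp
  · rw [Matrix.diagonal_apply_ne _ h.ne']
    apply horth i hi
    rw [hdeg' j hj]; exact_mod_cast h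

lemma hankel_det (L : ℝ[X] →ₗ[ℝ] ℝ) (m : ℕ) (p : ℕ → ℝ[X])
    (hmon : ∀ n ≤ m, (p n).Monic) (hdeg : ∀ n ≤ m, (p n).natDegree = n)
    (horth : ∀ n ≤ m, ∀ q : ℝ[X], q.degree < n → L (p n * q) = 0) (n : ℕ) (hn : n ≤ m) :
    Matrix.det (Matrix.of fun i j : Fin (n+1) => L (X ^ ((i:ℕ) + j)))
      = ∏ i ∈ Finset.range (n+1), L (p i * p i) := by
  have h := congrArg Matrix.det (hankel_decomp L m p hmon hdeg horth n hn)
  have h1 : Matrix.det (Matrix.of fun i j : Fin (n+1) => (p i).coeff j) = 1 := by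
    rw [Matrix.det_of_isLowerTriangular]
    · apply Finset.prod_eq_one
      intro i _
      have hi : (i:ℕ) ≤ m := by omega
      have := (hmon i hi).coeff_natDegree
      rw [hdeg i hi] at this
      exact this
    · intro i j hij
      have hij' : i < j := hij
      have hi : (i:ℕ) ≤ m := by omega
      apply coeff_eq_zero_of_natDegree_lt
      rw [hdeg i hi]; exact_mod_cast hij'
  rw [Matrix.det_mul, Matrix.det_mul, Matrix.det_transpose, h1, Matrix.det_diagonal] at h
  rw [Finset.prod_range]
  simpa using h

lemma exists_N (L : ℝ[X] →ₗ[ℝ] ℝ) (m : ℕ) (p : ℕ → ℝ[X])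
    (hmon : ∀ n ≤ m, (p n).Monic) (hdeg : ∀ n ≤ m, (p n).natDegree = n)
    (horth : ∀ n ≤ m, ∀ q : ℝ[X], q.degree < n → L (p n * q) = 0)
    (hpos : ∀ n ≤ m, 0 < L (p n * p n)) :
    ∃ N : ℕ → ℕ → ℝ, (∀ a n, a < n → n ≤ m → N a n = 0) ∧
      (∀ a ≤ m, ∀ b ≤ m, ∑ n ∈ Finset.range (m+1), N a n * (p n).coeff b = if a = b then 1 else 0) ∧
      (∀ a ≤ m, ∀ b ≤ m, L (X ^ (a + b)) =
        ∑ n ∈ Finset.range (m+1), N a n * L (p n * p n) * N b n) := by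
  set M := (Matrix.of fun i j : Fin (m+1) => (p i).coeff j) with hM
  set G := (Matrix.of fun i j : Fin (m+1) => L (X ^ ((i:ℕ) + j))) with hG
  set h : Fin (m+1) → ℝ := fun i => L (p i * p i) with hh
  have hpos' : ∀ i, h i ≠ 0 := fun i => (hpos i (by omega)).ne'
  have hdec : M * G * Mᵀ = Matrix.diagonal h := hankel_decomp L m p hmon hdeg horth m le_rfl
  let N := G * Mᵀ * Matrix.diagonal (fun i => (h i)⁻¹)
  have hMN : M * N = 1 := by
    simp only [N]
    rw [← Matrix.mul_assoc, ← Matrix.mul_assoc, hdec, Matrix.diagonal_mul_diagonal]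
    simp [hpos']
  have hNM : N * M = 1 := mul_eq_one_comm.1 hMN
  have hGt : Gᵀ = G := by
    ext i j; simp [hG, add_comm]
  have hNT : Nᵀ = Matrix.diagonal (fun i => (h i)⁻¹) * M * G := by
    simp only [N]
    rw [Matrix.transpose_mul, Matrix.transpose_mul, hGt, Matrix.diagonal_transpose, Matrix.transpose_transpose, Matrix.mul_assoc]
  have hGN : N * Matrix.diagonal h * Nᵀ = G := by
    have : Matrix.diagonal h * Nᵀ = M * G := by
      rw [hNT, ← Matrix.mul_assoc, ← Matrix.mul_assoc, Matrix.diagonal_mul_diagonal]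
      simp [hpos']
    rw [Matrix.mul_assoc, this, ← Matrix.mul_assoc, hNM, Matrix.one_mul]
  refine ⟨fun a n => L (p n * X ^ a) / L (p n * p n), ?_, ?_, ?_⟩
  · intro a n ha hn
    simp only
    rw [horth n hn _ (by rw [degree_X_pow]; exact_mod_cast ha), zero_div]
  all_goals
    have hN : ∀ i j : Fin (m+1), N i j = L (p j * X ^ (i:ℕ)) / L (p j * p j) := by
      intro i j
      simp only [N]
      rw [Matrix.mul_diagonal, div_eq_mul_inv]
      congr 1
      rw [Matrix.mul_apply, mul_comm (p j), L_expand L (m+1) _ _ (by simp; omega) (by rw [hdeg _ (by omega)]; omega)]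
      symm
      rw [Finset.sum_eq_single i]
      · apply Finset.sum_congr rfl
        intro l _
        simp [hG, hM]
      · intro b _ hb
        apply Finset.sum_eq_zero
        intro l _
        rw [coeff_X_pow, if_neg (by omega)]; simp
      · simp
    intro a ha b hb
  · have := congrFun (congrFun hNM ⟨a, by omega⟩) ⟨b, by omega⟩
    rw [Matrix.mul_apply, Matrix.one_apply] at this
    rw [Finset.sum_range]
    simp only [hN, Fin.mk.injEq] at this
    exact this
  · have := congrFun (congrFun hGN ⟨a, by omega⟩) ⟨b, by omega⟩
    rw [Matrix.mul_apply] at this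
    rw [Finset.sum_range]
    simp only [Matrix.mul_diagonal, Matrix.transpose_apply, hN] at this
    exact this.symm

lemma multi_bound (d m : ℕ) (S : Finset (Fin d → ℕ)) (hbox : ∀ α ∈ S, ∀ i, α i ≤ m)
    (hdown : ∀ α ∈ S, ∀ β : Fin d → ℕ, (∀ i, β i ≤ α i) → β ∈ S)
    (G M N : ℕ → ℕ → ℝ) (h w : ℕ → ℝ) (hpos : ∀ n ≤ m, 0 < h n)
    (htri : ∀ a n, a < n → n ≤ m → N a n = 0)
    (hNM : ∀ a ≤ m, ∀ b ≤ m, ∑ n ∈ Finset.range (m+1), N a n * M n b = if a = b then 1 else 0)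
    (hGN : ∀ a ≤ m, ∀ b ≤ m, G a b = ∑ n ∈ Finset.range (m+1), N a n * h n * N b n)
    (hw : ∀ n ≤ m, ∑ a ∈ Finset.range (m+1), M n a ^ 2 ≤ w n) (v : (Fin d → ℕ) → ℝ) :
    ∑ α ∈ S, v α ^ 2 ≤ (∑ a ∈ S, ∑ b ∈ S, v a * (∏ i, G (a i) (b i)) * v b) *
      ∑ β ∈ S, ∏ i, (w (β i) / h (β i)) := by
  let B : Finset (Fin d → ℕ) := Fintype.piFinset fun _ => Finset.range (m+1)
  have hB : ∀ β, β ∈ B ↔ ∀ i, β i ≤ m := by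
    intro β; simp [B]
  have hSB : S ⊆ B := fun α hα => (hB α).2 (hbox α hα)
  let u : (Fin d → ℕ) → ℝ := fun β => ∑ a ∈ S, v a * ∏ i, N (a i) (β i)
  let H : (Fin d → ℕ) → ℝ := fun β => ∏ i, h (β i)
  have hH : ∀ β ∈ B, 0 < H β := fun β hβ => Finset.prod_pos fun i _ => hpos _ ((hB β).1 hβ i)
  have hu : ∀ β ∈ B, β ∉ S → u β = 0 := by
    intro β hβ hβS
    apply Finset.sum_eq_zero
    intro a ha
    have : ∃ i, a i < β i := by
      by_contra hcon
      push Not at hcon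
      exact hβS (hdown a ha β hcon)
    obtain ⟨i, hi⟩ := this
    rw [Finset.prod_eq_zero (Finset.mem_univ i) (htri _ _ hi ((hB β).1 hβ i)), mul_zero]
  have hQ : (∑ a ∈ S, ∑ b ∈ S, v a * (∏ i, G (a i) (b i)) * v b) = ∑ β ∈ S, H β * u β ^ 2 := by
    have : ∑ β ∈ S, H β * u β ^ 2 = ∑ β ∈ B, H β * u β ^ 2 := by
      apply Finset.sum_subset hSB
      intro β h1 h2
      rw [hu β h1 h2]; simp
    rw [this]
    have h2 : ∀ β, H β * u β ^ 2 = ∑ a ∈ S, ∑ b ∈ S, v a * (∏ i, (N (a i) (β i) * h (β i) * N (b i) (β i))) * v b := by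
      intro β
      simp only [u, H]
      rw [sq, Finset.sum_mul_sum, Finset.mul_sum]
      apply Finset.sum_congr rfl
      intro a _
      rw [Finset.mul_sum]
      apply Finset.sum_congr rfl
      intro b _
      rw [Finset.prod_mul_distrib, Finset.prod_mul_distrib]
      ring
    simp only [h2]
    conv_rhs => rw [Finset.sum_comm]
    apply Finset.sum_congr rfl
    intro a ha
    conv_rhs => rw [Finset.sum_comm]
    apply Finset.sum_congr rfl
    intro b hb
    rw [← Finset.sum_mul, ← Finset.mul_sum]
    congr 2
    rw [← Finset.prod_univ_sum (fun _ : Fin d => Finset.range (m+1)) (fun i n => N (a i) n * h n * N (b i) n)]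
    apply Finset.prod_congr rfl
    intro i _
    exact hGN _ (hbox a ha i) _ (hbox b hb i)
  have hv : ∀ α ∈ S, v α = ∑ β ∈ S, u β * ∏ i, M (β i) (α i) := by
    intro α hα
    have : ∑ β ∈ S, u β * ∏ i, M (β i) (α i) = ∑ β ∈ B, u β * ∏ i, M (β i) (α i) := by
      apply Finset.sum_subset hSB
      intro β h1 h2
      rw [hu β h1 h2]; simp
    rw [this]
    simp only [u, Finset.sum_mul]
    rw [Finset.sum_comm]
    have h3 : ∀ a ∈ S, ∑ β ∈ B, v a * (∏ i, N (a i) (β i)) * ∏ i, M (β i) (α i) = if a = α then v a else 0 := by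
      intro a ha
      simp only [mul_assoc, ← Finset.prod_mul_distrib]
      rw [← Finset.mul_sum]
      rw [← Finset.prod_univ_sum (fun _ : Fin d => Finset.range (m+1)) (fun i n => N (a i) n * M n (α i))]
      rw [Finset.prod_congr rfl (fun i _ => hNM _ (hbox a ha i) _ (hbox α hα i))]
      split_ifs with hc
      · subst hc; simp
      · have : ∃ i, a i ≠ α i := by
          by_contra hcon
          push Not at hcon
          exact hc (funext hcon)
        obtain ⟨i, hi⟩ := this
        rw [Finset.prod_eq_zero (Finset.mem_univ i) (by simp [hi]), mul_zero]
    rw [Finset.sum_congr rfl h3]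
    simp [hα]
  rw [hQ]
  have hcs : ∀ α ∈ S, v α ^ 2 ≤ (∑ β ∈ S, H β * u β ^ 2) * ∑ β ∈ S, ∏ i, (M (β i) (α i) ^ 2 / h (β i)) := by
    intro α hα
    rw [hv α hα]
    apply Finset.sum_sq_le_sum_mul_sum_of_sq_le_mul
    · intro β hβ
      have := hH β (hSB hβ)
      positivity
    · intro β hβ
      exact Finset.prod_nonneg fun i _ => div_nonneg (sq_nonneg _) (hpos _ (hbox β hβ i)).le
    · intro β hβ
      have := (hH β (hSB hβ)).ne'
      apply le_of_eq
      rw [Finset.prod_div_distrib, Finset.prod_pow]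
      change _ = H β * u β ^ 2 * (_ / H β)
      field_simp
  calc _ ≤ ∑ α ∈ S, (∑ β ∈ S, H β * u β ^ 2) * ∑ β ∈ S, ∏ i, (M (β i) (α i) ^ 2 / h (β i)) :=
        Finset.sum_le_sum hcs
    _ = (∑ β ∈ S, H β * u β ^ 2) * ∑ β ∈ S, ∑ α ∈ S, ∏ i, (M (β i) (α i) ^ 2 / h (β i)) := by
        rw [← Finset.mul_sum, Finset.sum_comm]
    _ ≤ _ := by
        apply mul_le_mul_of_nonneg_left _ (Finset.sum_nonneg fun β hβ => by
          have := hH β (hSB hβ)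
          positivity)
        apply Finset.sum_le_sum
        intro β hβ
        have hb := hbox β hβ
        calc _ ≤ ∑ α ∈ B, ∏ i, (M (β i) (α i) ^ 2 / h (β i)) := by
              apply Finset.sum_le_sum_of_subset_of_nonneg hSB
              intro α _ _
              exact Finset.prod_nonneg fun i _ => div_nonneg (sq_nonneg _) (hpos _ (hb i)).le
          _ = ∏ i, ∑ a ∈ Finset.range (m+1), (M (β i) a ^ 2 / h (β i)) := by
              rw [Finset.prod_univ_sum (fun _ : Fin d => Finset.range (m+1)) (fun i a => (M (β i) a ^ 2 / h (β i)))]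
          _ ≤ _ := by
              apply Finset.prod_le_prod
              · intro i _
                exact Finset.sum_nonneg fun a _ => div_nonneg (sq_nonneg _) (hpos _ (hb i)).le
              · intro i _
                rw [← Finset.sum_div]
                exact div_le_div_of_nonneg_right (hw _ (hb i)) (hpos _ (hb i)).le

lemma bdd_ae (P : Measure ℝ) (hP : AdmissibleDist P) : ∀ᵐ x ∂P, |x| ≤ 1 := by
  obtain ⟨h1, h2, _⟩ := hP
  have := (mem_ae_iff_prob_eq_one (measurableSet_Icc (a := (-1:ℝ)) (b := 1))).2 h2
  filter_upwards [this] with x hx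
  exact abs_le.2 hx

lemma int_poly (P : Measure ℝ) (hP : AdmissibleDist P) (p : ℝ[X]) :
    Integrable (fun x => p.eval x) P := by
  have := hP.1
  obtain ⟨B, hB⟩ := (isCompact_Icc (a := (-1:ℝ)) (b := 1)).exists_bound_of_continuousOn p.continuous.continuousOn
  apply Integrable.of_bound (C := B) p.continuous.aestronglyMeasurable
  filter_upwards [bdd_ae P hP] with x hx
  exact hB x (abs_le.1 hx)

def Lfun (P : Measure ℝ) (hP : AdmissibleDist P) : ℝ[X] →ₗ[ℝ] ℝ where
  toFun p := ∫ x, p.eval x ∂P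
  map_add' p q := by
    simp only [eval_add]
    exact integral_add (int_poly P hP p) (int_poly P hP q)
  map_smul' c p := by
    simp only [eval_smul, smul_eq_mul, RingHom.id_apply]
    exact integral_const_mul c _

lemma Lfun_apply (P : Measure ℝ) (hP : AdmissibleDist P) (p : ℝ[X]) :
    Lfun P hP p = ∫ x, p.eval x ∂P := rfl

lemma Lfun_X_pow (P : Measure ℝ) (hP : AdmissibleDist P) (n : ℕ) :
    Lfun P hP (X ^ n) = momentP P n := by
  simp [Lfun_apply, momentP]

lemma Lfun_nonneg (P : Measure ℝ) (hP : AdmissibleDist P) (p : ℝ[X]) :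
    0 ≤ Lfun P hP (p * p) := by
  rw [Lfun_apply]
  apply integral_nonneg
  intro x
  simpa using mul_self_nonneg _

lemma Lfun_bdd (P : Measure ℝ) (hP : AdmissibleDist P) (p : ℝ[X]) :
    |Lfun P hP (X * (p * p))| ≤ Lfun P hP (p * p) := by
  rw [Lfun_apply, Lfun_apply, ← Real.norm_eq_abs]
  apply norm_integral_le_of_norm_le (int_poly P hP _)
  filter_upwards [bdd_ae P hP] with x hx
  simp only [eval_mul, eval_X, Real.norm_eq_abs, abs_mul, abs_mul_abs_self]
  nlinarith [mul_self_nonneg (p.eval x)]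

lemma Lfun_pos (P : Measure ℝ) (hP : AdmissibleDist P) (k : ℕ) (p : ℝ[X]) (hp : p ≠ 0)
    (hd : p.natDegree ≤ omegaP P k) : 0 < Lfun P hP (p * p) := by
  have := hP.1
  by_cases hd0 : p.natDegree = 0
  · obtain ⟨c, rfl⟩ := natDegree_eq_zero.1 hd0
    have hc : c ≠ 0 := by rintro rfl; simp at hp
    rw [Lfun_apply]
    simp only [eval_mul, eval_C]
    simp only [integral_const, probReal_univ, one_smul]
    exact mul_self_pos.2 hc
  apply lt_of_le_of_ne (Lfun_nonneg P hP p)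
  intro h0
  rw [Lfun_apply] at h0
  have h1 := (integral_eq_zero_iff_of_nonneg (fun x => by simpa using mul_self_nonneg (p.eval x))
    (int_poly P hP (p * p))).1 h0.symm
  have h2 : P {x | p.eval x ≠ 0} = 0 := by
    have h3 : ∀ᵐ x ∂P, p.eval x = 0 := by
      filter_upwards [h1] with x hx
      simpa using hx
    exact h3
  have hsub : measSupport P ⊆ (p.roots.toFinset : Set ℝ) := by
    intro x hx
    by_contra hx'
    simp [hp] at hx'
    exact hx _ (IsOpen.mem_nhds (isOpen_ne_fun p.continuous continuous_const) hx') h2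
  have hfin : (measSupport P).Finite := (Finset.finite_toSet _).subset hsub
  have hc : (measSupport P).ncard ≤ p.natDegree := by
    calc _ ≤ (p.roots.toFinset : Set ℝ).ncard := Set.ncard_le_ncard hsub
      _ = p.roots.toFinset.card := Set.ncard_coe_finset _
      _ ≤ _ := (Multiset.toFinset_card_le _).trans (card_roots' p)
  rw [omegaP, if_pos hfin] at hd
  have := hd.trans (min_le_left _ _)
  omega

lemma moment_abs_le (P : Measure ℝ) (hP : AdmissibleDist P) (n : ℕ) : |momentP P n| ≤ 1 := by
  have := hP.1
  rw [momentP, ← Real.norm_eq_abs]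
  have := norm_integral_le_of_norm_le (f := fun x : ℝ => x ^ n) (integrable_const (1:ℝ) (μ := P))
    (by
      filter_upwards [bdd_ae P hP] with x hx
      rw [norm_pow]
      exact pow_le_one₀ (norm_nonneg _) hx)
  simpa using this

lemma covMat_apply (P : Measure ℝ) (hP : AdmissibleDist P) (d k : ℕ) (a b) :
    covMat P d k a b = ∏ i, momentP P (a.1 i + b.1 i) := by
  have := hP.1
  simp only [covMat, Matrix.of_apply, piP, monom, momentP, ← Finset.prod_mul_distrib, ← pow_add]
  exact integral_fintype_prod_eq_prod (fun i (x : ℝ) => x ^ (a.1 i + b.1 i))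

lemma mem_multSet (P : Measure ℝ) (d k : ℕ) (α : Fin d → ℕ) :
    α ∈ multSet P d k ↔ (∀ i, α i ≤ omegaP P k) ∧ ∑ i, α i ≤ capM P d k := by
  simp [multSet]

lemma capM_le (P : Measure ℝ) (d k : ℕ) : capM P d k ≤ k := by
  unfold capM; split_ifs
  · exact min_le_left _ _
  · exact le_rfl

lemma ratio_bounds (P : Measure ℝ) (k : ℕ) (h : ∀ i ∈ Set.Icc 1 (omegaP P k), 0 < Dn P i / Dn P (i-1)) :
    0 < ratioMinK P k ∧ 1 / ratioMinK P k ≤ CPk P k ∧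
    ∃ μ : ℝ, 0 < μ ∧ μ ≤ 1 ∧ (∀ i ∈ Set.Icc 1 (omegaP P k), μ ≤ Dn P i / Dn P (i-1)) ∧
      ratioMinK P k ≤ μ ^ k := by
  have hf : ∀ g : ℕ → ℝ, (insert (1:ℝ) (g '' Set.Icc 1 (omegaP P k))).Finite := fun g =>
    ((Set.finite_Icc _ _).image g).insert 1
  have hne : ∀ g : ℕ → ℝ, (insert (1:ℝ) (g '' Set.Icc 1 (omegaP P k))).Nonempty := fun g =>
    Set.insert_nonempty _ _
  have hpos : ∀ g : ℕ → ℝ, (∀ i ∈ Set.Icc 1 (omegaP P k), 0 < g i) →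
      0 < sInf (insert (1:ℝ) (g '' Set.Icc 1 (omegaP P k))) := by
    intro g hg
    have := (hne g).csInf_mem (hf g)
    rcases this with h1 | ⟨i, hi, h1⟩
    · rw [h1]; norm_num
    · rw [← h1]; exact hg i hi
  have hR : 0 < ratioMinK P k := hpos _ fun i hi => pow_pos (h i hi) _
  have hc : 0 < cPk P k := hpos _ fun i hi => Real.rpow_pos_of_pos (h i hi) _
  have hc1 : cPk P k ≤ 1 := csInf_le (hf _).bddBelow (Set.mem_insert _ _)
  have hM1 : 1 ≤ ratioMaxK P k := le_csSup (hf _).bddAbove (Set.mem_insert _ _)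
  refine ⟨hR, ?_, ?_⟩
  · unfold CPk fPk
    rw [le_div_iff₀ hc]
    have h1 : 1 ≤ max (momentP P (2 * omegaP P k) ^ k) 1 * ratioMaxK P k := by
      have := le_max_right (momentP P (2 * omegaP P k) ^ k) 1
      nlinarith
    calc 1 / ratioMinK P k * cPk P k ≤ 1 / ratioMinK P k * 1 := by gcongr
      _ = 1 / ratioMinK P k := mul_one _
      _ ≤ _ := by gcongr
  · refine ⟨sInf (insert (1:ℝ) ((fun i => Dn P i / Dn P (i-1)) '' Set.Icc 1 (omegaP P k))),
      hpos _ h, csInf_le (hf _).bddBelow (Set.mem_insert _ _), ?_, ?_⟩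
    · intro i hi
      exact csInf_le (hf _).bddBelow (Set.mem_insert_of_mem _ ⟨i, hi, rfl⟩)
    · have := (hne (fun i => Dn P i / Dn P (i-1))).csInf_mem (hf _)
      rcases this with h1 | ⟨i, hi, h1⟩
      · rw [h1, one_pow]
        exact csInf_le (hf _).bddBelow (Set.mem_insert _ _)
      · rw [← h1]
        exact csInf_le (hf _).bddBelow (Set.mem_insert_of_mem _ ⟨i, hi, rfl⟩)

lemma lower_bound (P : Measure ℝ) (hP : AdmissibleDist P) (d k : ℕ) (hd : 2 ≤ d) :
    0 < ratioMinK P k ∧ 1 / ratioMinK P k ≤ CPk P k ∧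
    ∀ v : {α // α ∈ multSet P d k} → ℝ, ∑ i, v i ^ 2 = 1 →
      1 ≤ quadForm (covMat P d k) v * (1 / ratioMinK P k * (1 + 2 * d) ^ k) := by
  set m := omegaP P k with hm
  set L := Lfun P hP with hL
  have hposL : ∀ p : ℝ[X], p ≠ 0 → p.natDegree ≤ m → 0 < L (p * p) := fun p h1 h2 =>
    Lfun_pos P hP k p h1 h2
  have hex : ∀ n, ∃ q : ℝ[X], n ≤ m → (q.Monic ∧ q.natDegree = n ∧
      ∀ p : ℝ[X], p.degree < n → L (q * p) = 0) := by
    intro n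
    by_cases hn : n ≤ m
    · obtain ⟨q, hq⟩ := exists_orth L n (fun p hp hpd => hposL p hp
        ((natDegree_le_of_degree_le hpd.le).trans hn))
      exact ⟨q, fun _ => hq⟩
    · exact ⟨0, fun h => absurd h hn⟩
  choose p hp using hex
  have hmon := fun n hn => (hp n hn).1
  have hdeg := fun n hn => (hp n hn).2.1
  have horth := fun n hn => (hp n hn).2.2
  have hh : ∀ n ≤ m, 0 < L (p n * p n) := fun n hn =>
    hposL _ (hmon n hn).ne_zero (by rw [hdeg n hn]; exact hn)
  have hh0 : L (p 0 * p 0) = 1 := by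
    have h1 : p 0 = 1 := by
      have := hdeg 0 (Nat.zero_le _)
      exact (hmon 0 (Nat.zero_le _)).natDegree_eq_zero.1 this
    have := hP.1
    rw [h1, hL, Lfun_apply]; simp
  have hDn : ∀ n ≤ m, Dn P n = ∏ i ∈ Finset.range (n+1), L (p i * p i) := by
    intro n hn
    rw [← hankel_det L m p hmon hdeg horth n hn, Dn]
    simp only [hL, Lfun_X_pow]
  have hratio : ∀ i ∈ Set.Icc 1 m, Dn P i / Dn P (i-1) = L (p i * p i) := by
    intro i hi
    obtain ⟨h1, h2⟩ := hi
    obtain ⟨j, rfl⟩ : ∃ j, i = j + 1 := ⟨i - 1, by omega⟩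
    have : 0 < Dn P j := by
      rw [hDn j (by omega)]
      exact Finset.prod_pos fun i hi => hh i (by simp at hi; omega)
    rw [Nat.add_sub_cancel, hDn (j+1) h2, Finset.prod_range_succ, ← hDn j (by omega)]
    field_simp
  obtain ⟨hR, hC, μ, hμ0, hμ1, hμ, hRμ⟩ := ratio_bounds P k (fun i hi => by
    rw [hratio i hi]; exact hh i hi.2)
  refine ⟨hR, hC, ?_⟩
  intro v hv
  obtain ⟨N, hN1, hN2, hN3⟩ := exists_N L m p hmon hdeg horth hh
  let v' : (Fin d → ℕ) → ℝ := fun α => if h : α ∈ (multSet P d k) then v ⟨α, h⟩ else 0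
  have hv' : ∀ a : {α // α ∈ (multSet P d k)}, v' a.1 = v a := fun a => by simp [v']
  have key := multi_bound d m (multSet P d k) (fun α hα => ((mem_multSet P d k α).1 hα).1)
    (fun α hα β hβ => (mem_multSet P d k β).2
      ⟨fun i => (hβ i).trans (((mem_multSet P d k α).1 hα).1 i),
       (Finset.sum_le_sum fun i _ => hβ i).trans ((mem_multSet P d k α).1 hα).2⟩)
    (fun a b => L (X ^ (a + b))) (fun n a => (p n).coeff a) N (fun n => L (p n * p n))
    (fun n => (n.centralBinom : ℝ)) hh hN1 hN2 hN3
    (fun n hn => coeff_sq_sum (p n) n (m+1) (root_bound L n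
      (fun q h1 h2 => hposL q h1 (h2.le.trans hn)) (Lfun_bdd P hP) (Lfun_nonneg P hP) (p n)
      (hmon n hn) (hdeg n hn) (fun q hq => by
        rcases eq_or_ne q 0 with rfl | h0
        · simp
        · exact horth n hn q ((natDegree_lt_iff_degree_lt h0).1 hq)))) v'
  have e1 : ∑ α ∈ (multSet P d k), v' α ^ 2 = 1 := by
    rw [← Finset.sum_coe_sort (multSet P d k), ← hv]
    exact Finset.sum_congr rfl fun a _ => by rw [hv']
  have e2 : (∑ a ∈ (multSet P d k), ∑ b ∈ (multSet P d k), v' a * (∏ i, L (X ^ (a i + b i))) * v' b)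
      = quadForm (covMat P d k) v := by
    rw [← Finset.sum_coe_sort (multSet P d k), quadForm]
    refine Finset.sum_congr rfl fun a _ => ?_
    rw [← Finset.sum_coe_sort (multSet P d k)]
    refine Finset.sum_congr rfl fun b _ => ?_
    rw [hv', hv', covMat_apply P hP]
    simp only [hL, Lfun_X_pow]
  rw [e1, e2] at key
  have hsum : ∀ α ∈ (multSet P d k), ∑ i, α i ≤ k := fun α hα =>
    ((mem_multSet P d k α).1 hα).2.trans (capM_le P d k)
  have hw : ∀ n ≤ m, μ ^ n ≤ L (p n * p n) := by
    intro n hn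
    rcases Nat.eq_zero_or_pos n with rfl | h0
    · rw [hh0]; simp
    · have := hμ n ⟨h0, hn⟩
      rw [hratio n ⟨h0, hn⟩] at this
      exact (pow_le_of_le_one hμ0.le hμ1 h0.ne').trans this
  have hT : ∑ β ∈ (multSet P d k), ∏ i, ((β i).centralBinom / L (p (β i) * p (β i)) : ℝ)
      ≤ 1 / ratioMinK P k * (1 + 2 * d) ^ k := by
    calc _ ≤ ∑ β ∈ (multSet P d k), 1 / ratioMinK P k * ∏ i, ((β i).centralBinom : ℝ) := by
          apply Finset.sum_le_sum
          intro β hβ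
          have hb := ((mem_multSet P d k β).1 hβ).1
          rw [Finset.prod_div_distrib, div_eq_mul_one_div, mul_comm]
          apply mul_le_mul_of_nonneg_right _ (Finset.prod_nonneg fun _ _ => by positivity)
          apply one_div_le_one_div_of_le hR
          calc ratioMinK P k ≤ μ ^ k := hRμ
            _ ≤ μ ^ (∑ i, β i) := pow_le_pow_of_le_one hμ0.le hμ1 (hsum β hβ)
            _ = ∏ i, μ ^ (β i) := (Finset.prod_pow_eq_pow_sum _ _ _).symm
            _ ≤ _ := Finset.prod_le_prod (fun _ _ => by positivity) fun i _ => hw _ (hb i)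
      _ = 1 / ratioMinK P k * ∑ β ∈ (multSet P d k), ∏ i, ((β i).centralBinom : ℝ) := by rw [Finset.mul_sum]
      _ ≤ _ := by
          apply mul_le_mul_of_nonneg_left _ (by positivity)
          apply aux_S (fun n => (n.centralBinom : ℝ)) 2 (by norm_num) (by simp) (fun _ => by positivity)
            _ d hd k (multSet P d k) hsum
          intro n
          have := Nat.succ_mul_centralBinom_succ n
          apply le_of_eq
          exact_mod_cast this
  have hQ0 : 0 ≤ quadForm (covMat P d k) v := by
    by_contra hneg
    push Not at hneg
    have : 0 ≤ ∑ β ∈ (multSet P d k), ∏ i, ((β i).centralBinom / L (p (β i) * p (β i)) : ℝ) :=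
      Finset.sum_nonneg fun β hβ => Finset.prod_nonneg fun i _ =>
        div_nonneg (by positivity) (hh _ (((mem_multSet P d k β).1 hβ).1 i)).le
    nlinarith
  exact key.trans (mul_le_mul_of_nonneg_left hT hQ0)

lemma upper_bound (P : Measure ℝ) (hP : AdmissibleDist P) (d k : ℕ) (hd : 2 ≤ d)
    (v : {α // α ∈ multSet P d k} → ℝ) (hv : ∑ i, v i ^ 2 = 1) :
    quadForm (covMat P d k) v ≤ (1 + d) ^ k := by
  have hcard : ((multSet P d k).card : ℝ) ≤ (1 + d) ^ k := by
    have := aux_S (fun _ => 1) 1 (by norm_num) rfl (fun _ => by norm_num)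
      (fun n => by have : (0:ℝ) ≤ n := by positivity
                   linarith) d hd k (multSet P d k) (fun α hα =>
        ((mem_multSet P d k α).1 hα).2.trans (capM_le P d k))
    simpa using this
  have hent : ∀ a b, |covMat P d k a b| ≤ 1 := by
    intro a b
    rw [covMat_apply P hP, Finset.abs_prod]
    exact Finset.prod_le_one (fun _ _ => abs_nonneg _) fun _ _ => moment_abs_le P hP _
  calc quadForm (covMat P d k) v ≤ ∑ a, ∑ b, |v a| * |v b| := by
        apply Finset.sum_le_sum; intro a _
        apply Finset.sum_le_sum; intro b _
        refine (le_abs_self _).trans ?_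
        rw [abs_mul, abs_mul]
        have := hent a b
        have h1 := abs_nonneg (v a)
        have h2 := abs_nonneg (v b)
        calc _ ≤ |v a| * 1 * |v b| := by gcongr
          _ = _ := by ring
    _ = (∑ a, |v a|) ^ 2 := by rw [sq, Finset.sum_mul_sum]
    _ ≤ (Finset.univ : Finset {α // α ∈ multSet P d k}).card * ∑ a, |v a| ^ 2 := sq_sum_le_card_mul_sum_sq
    _ = (multSet P d k).card := by simp only [sq_abs]; rw [hv]; simp
    _ ≤ _ := hcard

/-- Condition number bound: for `d ≥ 4`,
`κ(Σ) = λ_max(Σ)/λ_min(Σ) ≤ C(P,k) d^{3k}`, stated as `λ_max(Σ) ≤ C(P,k) d^{3k} λ_min(Σ)`. -/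
theorem covariance_condition_number_bound
    (P : Measure ℝ) (hP : AdmissibleDist P) (d k : ℕ) (hd : 4 ≤ d) :
    lamMax (covMat P d k) ≤ CPk P k * (d : ℝ) ^ (3 * k) * lamMin (covMat P d k) := by
  obtain ⟨hR, hC, hlow⟩ := lower_bound P hP d k (by omega)
  have hne : {r : ℝ | ∃ v : {α // α ∈ multSet P d k} → ℝ, ∑ i, v i ^ 2 = 1 ∧
      r = quadForm (covMat P d k) v}.Nonempty := by
    have h0 : (0 : Fin d → ℕ) ∈ multSet P d k := (mem_multSet P d k 0).2 (by simp)
    refine ⟨_, Pi.single ⟨0, h0⟩ 1, ?_, rfl⟩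
    rw [Finset.sum_eq_single ⟨0, h0⟩]
    · simp
    · intro b _ hb; simp [Pi.single_eq_of_ne hb]
    · simp
  have hmax : lamMax (covMat P d k) ≤ (1 + d) ^ k := by
    apply csSup_le hne
    rintro r ⟨v, hv, rfl⟩
    exact upper_bound P hP d k (by omega) v hv
  have hmin : (1 / ratioMinK P k * (1 + 2 * d : ℝ) ^ k)⁻¹ ≤ lamMin (covMat P d k) := by
    apply le_csInf hne
    rintro r ⟨v, hv, rfl⟩
    rw [inv_le_iff_one_le_mul₀ (by positivity)]
    exact hlow v hv
  have hd4 : (4:ℝ) ≤ d := by exact_mod_cast hd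
  have hpoly : (1 + d : ℝ) * (1 + 2 * d) ≤ d ^ 3 := by
    nlinarith [mul_nonneg (sub_nonneg.2 hd4) (sq_nonneg (d:ℝ)), mul_nonneg (sub_nonneg.2 hd4) (by linarith : (0:ℝ) ≤ d)]
  have hpow : (1 + d : ℝ) ^ k * (1 + 2 * d) ^ k ≤ d ^ (3 * k) := by
    rw [← mul_pow, pow_mul]
    exact pow_le_pow_left₀ (by positivity) hpoly k
  have hC0 : 0 ≤ CPk P k := le_trans (by positivity) hC
  calc lamMax (covMat P d k) ≤ (1 + d) ^ k := hmax
    _ ≤ (d:ℝ) ^ (3 * k) / (1 + 2 * d) ^ k := by rw [le_div_iff₀ (by positivity)]; exact hpow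
    _ = 1 / ratioMinK P k * (d:ℝ) ^ (3 * k) * (1 / ratioMinK P k * (1 + 2 * d : ℝ) ^ k)⁻¹ := by
        field_simp
    _ ≤ CPk P k * (d : ℝ) ^ (3 * k) * (1 / ratioMinK P k * (1 + 2 * d : ℝ) ^ k)⁻¹ := by gcongr
    _ ≤ _ := by gcongr

end
end

section
/- Let P be a non-constant distribution supported in [-1,1], X ∈ [-1,1]^d with i.i.d. coordinates from P, C the (d,k)-multiplicities set, Σ = E[𝒳𝒳ᵀ] with 𝒳 = (X_α)_{α∈C}, and define the |C|×|C| matrices V with V_{α,β} = E[X_α T_β(X)] / E[X_β T_β(X)] and the diagonal matrix D with D_{α,α} = E[X_α T_α(X)]². Then: (1) Σ = V D Vᵀ; (2) λ_min(Σ) ≥ (min_{α∈C} E[X_α T_α(X)]²) · σ_min(V)²; (3) λ_max(Σ) ≤ (max_{α∈C} E[X_α T_α(X)]²) · σ_max(V)². -/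
open MeasureTheory Polynomial Matrix
open scoped Classical

noncomputable section

/-- `E[X_α T_β(X)]` for `X ∼ P^{⊗d}`. -/
def Ecoef (P : Measure ℝ) (T : ℕ → Polynomial ℝ) {d : ℕ} (α β : Fin d → ℕ) : ℝ :=
  ∫ x, monom α x * ∏ i, (T (β i)).eval (x i) ∂(piP P d)

/-- The matrix `V` with `V_{α,β} = E[X_α T_β(X)] / E[X_β T_β(X)]`. -/
def Vmat (P : Measure ℝ) (T : ℕ → Polynomial ℝ) (d k : ℕ) :
    Matrix {α // α ∈ multSet P d k} {α // α ∈ multSet P d k} ℝ :=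
  Matrix.of fun a b => Ecoef P T a.1 b.1 / Ecoef P T b.1 b.1

/-- The diagonal matrix `D` with `D_{α,α} = E[X_α T_α(X)]²`. -/
def Dmat (P : Measure ℝ) (T : ℕ → Polynomial ℝ) (d k : ℕ) :
    Matrix {α // α ∈ multSet P d k} {α // α ∈ multSet P d k} ℝ :=
  Matrix.of fun a b => if a = b then Ecoef P T a.1 a.1 ^ 2 else 0

section helpers

lemma cd_quad_gram {n : Type*} [Fintype n] (V : Matrix n n ℝ) (v : n → ℝ) :
    quadForm (Vᵀ * V) v = ∑ i, (V *ᵥ v) i ^ 2 := by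
  have h1 : quadForm (Vᵀ * V) v = v ⬝ᵥ ((Vᵀ * V) *ᵥ v) := by
    simp only [quadForm, dotProduct, Matrix.mulVec, Finset.mul_sum, mul_assoc]
  rw [h1, ← Matrix.mulVec_mulVec, Matrix.dotProduct_mulVec, Matrix.vecMul_transpose]
  simp [dotProduct, sq]

lemma cd_quad_diag {n : Type*} [Fintype n] (V : Matrix n n ℝ) (D : n → ℝ) (v : n → ℝ) :
    quadForm (V * Matrix.diagonal D * Vᵀ) v = ∑ i, D i * (Vᵀ *ᵥ v) i ^ 2 := by
  have h1 : quadForm (V * Matrix.diagonal D * Vᵀ) v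
      = v ⬝ᵥ ((V * Matrix.diagonal D * Vᵀ) *ᵥ v) := by
    simp only [quadForm, dotProduct, Matrix.mulVec, Finset.mul_sum, mul_assoc]
  rw [h1, ← Matrix.mulVec_mulVec, ← Matrix.mulVec_mulVec, Matrix.dotProduct_mulVec,
    ← Matrix.mulVec_transpose]
  simp only [dotProduct, Matrix.mulVec_diagonal]
  refine Finset.sum_congr rfl fun i _ => by ring

lemma cd_quad_smul {n : Type*} [Fintype n] (A : Matrix n n ℝ) (c : ℝ) (v : n → ℝ) :
    quadForm A (c • v) = c ^ 2 * quadForm A v := by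
  simp only [quadForm, Finset.mul_sum, Pi.smul_apply, smul_eq_mul]
  refine Finset.sum_congr rfl fun i _ => Finset.sum_congr rfl fun j _ => by ring

lemma cd_bdd {n : Type*} [Fintype n] (A : Matrix n n ℝ) :
    BddAbove {r : ℝ | ∃ v : n → ℝ, ∑ i, v i ^ 2 = 1 ∧ r = quadForm A v} := by
  refine ⟨∑ i, ∑ j, |A i j|, ?_⟩
  rintro r ⟨v, hv, rfl⟩
  have hb : ∀ i, |v i| ≤ 1 := by
    intro i
    have : v i ^ 2 ≤ ∑ i, v i ^ 2 :=
      Finset.single_le_sum (f := fun i => v i ^ 2) (fun i _ => sq_nonneg _) (Finset.mem_univ i)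
    rw [hv] at this
    exact (sq_le_one_iff_abs_le_one _).1 this
  refine Finset.sum_le_sum fun i _ => Finset.sum_le_sum fun j _ => ?_
  refine (le_abs_self _).trans ?_
  rw [abs_mul, abs_mul]
  have := mul_le_mul (hb i) (hb j) (abs_nonneg _) zero_le_one
  nlinarith [abs_nonneg (A i j)]

lemma cd_unit {n : Type*} [Fintype n] (v : n → ℝ) (hv : 0 < ∑ i, v i ^ 2) :
    ∑ i, ((√(∑ i, v i ^ 2))⁻¹ • v) i ^ 2 = 1 := by
  simp only [Pi.smul_apply, smul_eq_mul, mul_pow, ← Finset.mul_sum, inv_pow]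
  rw [Real.sq_sqrt hv.le, inv_mul_cancel₀ hv.ne']

lemma cd_le_lamMax {n : Type*} [Fintype n] (A : Matrix n n ℝ) (v : n → ℝ) :
    quadForm A v ≤ lamMax A * ∑ i, v i ^ 2 := by
  have h0 : 0 ≤ ∑ i, v i ^ 2 := Finset.sum_nonneg fun i _ => sq_nonneg _
  rcases h0.eq_or_lt with h | h
  · have hz : v = 0 := by
      have := (Finset.sum_eq_zero_iff_of_nonneg (fun i _ => sq_nonneg (v i))).1 h.symm
      funext i; simpa using this i (Finset.mem_univ i)
    simp [hz, quadForm]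
  · have := le_csSup (cd_bdd A) ⟨_, cd_unit v h, rfl⟩
    rw [cd_quad_smul, inv_pow, Real.sq_sqrt h.le] at this
    rw [inv_mul_le_iff₀ h] at this
    rw [mul_comm]; exact this

lemma cd_lamMin_le {n : Type*} [Fintype n] (A : Matrix n n ℝ) (hA : ∀ v, 0 ≤ quadForm A v)
    (v : n → ℝ) : lamMin A * ∑ i, v i ^ 2 ≤ quadForm A v := by
  have h0 : 0 ≤ ∑ i, v i ^ 2 := Finset.sum_nonneg fun i _ => sq_nonneg _
  rcases h0.eq_or_lt with h | h
  · rw [← h, mul_zero]; exact hA v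
  · have hb : BddBelow {r : ℝ | ∃ v : n → ℝ, ∑ i, v i ^ 2 = 1 ∧ r = quadForm A v} := by
      refine ⟨0, ?_⟩
      rintro r ⟨v, hv, rfl⟩
      exact hA v
    have := csInf_le hb ⟨_, cd_unit v h, rfl⟩
    rw [cd_quad_smul, inv_pow, Real.sq_sqrt h.le, le_inv_mul_iff₀ h] at this
    rw [mul_comm]; exact this

lemma cd_lamMin_nonneg {n : Type*} [Fintype n] (A : Matrix n n ℝ) (hA : ∀ v, 0 ≤ quadForm A v) :
    0 ≤ lamMin A := by
  apply Real.sInf_nonneg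
  rintro r ⟨v, hv, rfl⟩
  exact hA v

lemma cd_lamMax_nonneg {n : Type*} [Fintype n] (A : Matrix n n ℝ) (hA : ∀ v, 0 ≤ quadForm A v) :
    0 ≤ lamMax A := by
  apply Real.sSup_nonneg
  rintro r ⟨v, hv, rfl⟩
  exact hA v

lemma cd_gram_nonneg {n : Type*} [Fintype n] (V : Matrix n n ℝ) (v : n → ℝ) :
    0 ≤ quadForm (Vᵀ * V) v := by
  rw [cd_quad_gram]; exact Finset.sum_nonneg fun i _ => sq_nonneg _

lemma cd_dot {n : Type*} [Fintype n] (V : Matrix n n ℝ) (u v : n → ℝ) :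
    ∑ i, (Vᵀ *ᵥ v) i * u i = ∑ i, v i * (V *ᵥ u) i := by
  have := Matrix.dotProduct_mulVec v V u
  rw [← Matrix.mulVec_transpose] at this
  exact this.symm

lemma cd_upper {n : Type*} [Fintype n] (V : Matrix n n ℝ) (v : n → ℝ) :
    ∑ i, (Vᵀ *ᵥ v) i ^ 2 ≤ lamMax (Vᵀ * V) * ∑ i, v i ^ 2 := by
  set w := Vᵀ *ᵥ v with hw
  have h1 := cd_dot V w v
  rw [← hw] at h1
  have h2 := Finset.sum_mul_sq_le_sq_mul_sq Finset.univ v (V *ᵥ w)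
  rw [← h1, ← cd_quad_gram] at h2
  have h3 := cd_le_lamMax (Vᵀ * V) w
  have h0 : 0 ≤ ∑ i, v i ^ 2 := Finset.sum_nonneg fun i _ => sq_nonneg _
  have hw0 : 0 ≤ ∑ i, w i ^ 2 := Finset.sum_nonneg fun i _ => sq_nonneg _
  simp only [← sq] at h2
  rcases hw0.eq_or_lt with h | h
  · rw [← h]; exact mul_nonneg (cd_lamMax_nonneg _ (cd_gram_nonneg V)) h0
  · have h4 := h2.trans (mul_le_mul_of_nonneg_left h3 h0)
    refine le_of_mul_le_mul_right ?_ h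
    nlinarith

lemma cd_lower {n : Type*} [Fintype n] (V : Matrix n n ℝ) (v : n → ℝ) :
    lamMin (Vᵀ * V) * ∑ i, v i ^ 2 ≤ ∑ i, (Vᵀ *ᵥ v) i ^ 2 := by
  have h0 : 0 ≤ ∑ i, v i ^ 2 := Finset.sum_nonneg fun i _ => sq_nonneg _
  have hw0 : 0 ≤ ∑ i, (Vᵀ *ᵥ v) i ^ 2 := Finset.sum_nonneg fun i _ => sq_nonneg _
  rcases (cd_lamMin_nonneg _ (cd_gram_nonneg V)).eq_or_lt with h | h
  · rw [← h, zero_mul]; exact hw0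
  · have hinj : Function.Injective V.mulVecLin := by
      rw [← LinearMap.ker_eq_bot, LinearMap.ker_eq_bot']
      intro u hu
      have h1 := cd_lamMin_le _ (cd_gram_nonneg V) u
      rw [cd_quad_gram] at h1
      rw [Matrix.mulVecLin_apply] at hu
      simp only [hu, Pi.zero_apply] at h1
      have h2 : ∑ i, u i ^ 2 ≤ 0 := by
        by_contra hc
        push Not at hc
        have := mul_pos h hc
        simp at h1
        linarith
      have h3 := le_antisymm h2 (Finset.sum_nonneg fun i _ => sq_nonneg _)
      have := (Finset.sum_eq_zero_iff_of_nonneg (fun i _ => sq_nonneg (u i))).1 h3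
      funext i; simpa using this i (Finset.mem_univ i)
    obtain ⟨u, hu⟩ := (LinearMap.injective_iff_surjective.1 hinj) v
    rw [Matrix.mulVecLin_apply] at hu
    have h1 := cd_dot V u v
    rw [hu] at h1
    have h2 := Finset.sum_mul_sq_le_sq_mul_sq Finset.univ (Vᵀ *ᵥ v) u
    rw [h1] at h2
    simp only [← sq] at h2
    have h3 := cd_lamMin_le _ (cd_gram_nonneg V) u
    rw [cd_quad_gram, hu] at h3
    rcases h0.eq_or_lt with h5 | h5
    · rw [← h5, mul_zero]; exact hw0
    · refine le_of_mul_le_mul_right ?_ h5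
      nlinarith [mul_le_mul_of_nonneg_left h3 hw0, mul_le_mul_of_nonneg_left h2 h.le]

lemma cd_linalg {n : Type*} [Fintype n] [Nonempty n] (A V : Matrix n n ℝ) (D : n → ℝ)
    (hD : ∀ i, 0 ≤ D i) (hA : A = V * Matrix.diagonal D * Vᵀ) :
    sInf {r : ℝ | ∃ a, r = D a} * sigMin V ^ 2 ≤ lamMin A ∧
    lamMax A ≤ sSup {r : ℝ | ∃ a, r = D a} * sigMax V ^ 2 := by
  have hr : {r : ℝ | ∃ a, r = D a} = Set.range D := by
    ext r; simp [eq_comm]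
  have hfin := Set.finite_range D
  have hne : ({r : ℝ | ∃ v : n → ℝ, ∑ i, v i ^ 2 = 1 ∧ r = quadForm A v}).Nonempty := by
    obtain ⟨i⟩ := ‹Nonempty n›
    refine ⟨_, Pi.single i 1, ?_, rfl⟩
    rw [Finset.sum_eq_single i] <;> simp +contextual [Pi.single_apply]
  rw [hr, sigMin, sigMax, Real.sq_sqrt (cd_lamMin_nonneg _ (cd_gram_nonneg V)),
    Real.sq_sqrt (cd_lamMax_nonneg _ (cd_gram_nonneg V))]
  constructor
  · apply le_csInf hne
    rintro r ⟨v, hv, rfl⟩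
    have h1 := cd_lower V v
    rw [hv, mul_one] at h1
    rw [hA, cd_quad_diag]
    have h2 : 0 ≤ sInf (Set.range D) := by
      apply Real.sInf_nonneg
      rintro _ ⟨a, rfl⟩; exact hD a
    refine (mul_le_mul_of_nonneg_left h1 h2).trans ?_
    rw [Finset.mul_sum]
    exact Finset.sum_le_sum fun i _ => mul_le_mul_of_nonneg_right
      (csInf_le hfin.bddBelow ⟨i, rfl⟩) (sq_nonneg _)
  · apply csSup_le hne
    rintro r ⟨v, hv, rfl⟩
    have h1 := cd_upper V v
    rw [hv, mul_one] at h1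
    rw [hA, cd_quad_diag]
    have h2 : 0 ≤ sSup (Set.range D) := by
      apply Real.sSup_nonneg
      rintro _ ⟨a, rfl⟩; exact hD a
    refine le_trans ?_ (mul_le_mul_of_nonneg_left h1 h2)
    rw [Finset.mul_sum]
    exact Finset.sum_le_sum fun i _ => mul_le_mul_of_nonneg_right
      (le_csSup hfin.bddAbove ⟨i, rfl⟩) (sq_nonneg _)

/-- one-dimensional integrability -/
lemma cd_int (P : Measure ℝ) (hP : AdmissibleDist P) (p : Polynomial ℝ) :
    Integrable (fun x => p.eval x) P := by
  obtain ⟨h1, h2, -⟩ := hP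
  have h3 : P.restrict (Set.Icc (-1 : ℝ) 1) = P := by
    apply Measure.restrict_eq_self_of_ae_mem
    exact (mem_ae_iff_prob_eq_one measurableSet_Icc).2 h2
  rw [← h3]
  exact (p.continuous.continuousOn).integrableOn_compact isCompact_Icc

lemma cd_int2 (P : Measure ℝ) (hP : AdmissibleDist P) (p q : Polynomial ℝ) :
    Integrable (fun x => p.eval x * q.eval x) P := by
  simpa using cd_int P hP (p * q)

/-- expansion in the span -/
lemma cd_span (T : ℕ → Polynomial ℝ) (w : ℕ)
    (hdeg : ∀ i ≤ w, (T i).natDegree = i)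
    (hlead : ∀ i ≤ w, 0 < (T i).leadingCoeff) (n : ℕ) :
    ∀ p : Polynomial ℝ, p.degree < n → n ≤ w + 1 →
      ∃ c : ℕ → ℝ, p = ∑ j ∈ Finset.range n, C (c j) * T j := by
  induction n with
  | zero =>
    intro p hp _
    refine ⟨0, ?_⟩
    have : p = 0 := by
      rw [← Polynomial.degree_eq_bot]
      exact Polynomial.degree_eq_bot.2 (by
        by_contra h
        have := Polynomial.zero_le_degree_iff.2 h
        exact absurd hp (not_lt.2 (by simpa using this)))
    simp [this]
  | succ n ih =>
    intro p hp hn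
    have hl := hlead n (by omega)
    have hd := hdeg n (by omega)
    have hlc : (T n).coeff n = (T n).leadingCoeff := by rw [Polynomial.leadingCoeff, hd]
    have hT : (T n).degree ≤ n := by
      exact Polynomial.degree_le_natDegree.trans (by rw [hd])
    obtain ⟨c, hc⟩ := ih (p - C (p.coeff n / (T n).leadingCoeff) * T n) (by
      rw [Polynomial.degree_lt_iff_coeff_zero]
      intro m hm
      rcases hm.eq_or_lt with rfl | hm
      · simp [hlc, hl.ne']
      · have e1 : p.coeff m = 0 := Polynomial.coeff_eq_zero_of_degree_lt
          (lt_of_lt_of_le hp (by exact_mod_cast hm))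
        have e2 : (T n).coeff m = 0 := Polynomial.coeff_eq_zero_of_natDegree_lt (by omega)
        simp [e1, e2]) (by omega)
    refine ⟨fun j => if j = n then p.coeff n / (T n).leadingCoeff else c j, ?_⟩
    rw [Finset.sum_range_succ, ← sub_eq_iff_eq_add]
    simp only [if_true]
    rw [hc]
    refine Finset.sum_congr rfl fun j hj => ?_
    rw [if_neg (Finset.mem_range.1 hj).ne]

/-- one-dimensional coefficients -/
def cdm (P : Measure ℝ) (T : ℕ → Polynomial ℝ) (a j : ℕ) : ℝ := ∫ x, x ^ a * (T j).eval x ∂P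

section one
variable (P : Measure ℝ) (hP : AdmissibleDist P) (T : ℕ → Polynomial ℝ) (w : ℕ)
    (hdeg : ∀ i ≤ w, (T i).natDegree = i)
    (hlead : ∀ i ≤ w, 0 < (T i).leadingCoeff)
    (horth : ∀ i ≤ w, ∀ j ≤ w,
      ∫ x, (T i).eval x * (T j).eval x ∂P = if i = j then 1 else 0)

lemma cd_coef (P : Measure ℝ) (hP : AdmissibleDist P) (T : ℕ → Polynomial ℝ) (w : ℕ)
    (horth : ∀ i ≤ w, ∀ j ≤ w,
      ∫ x, (T i).eval x * (T j).eval x ∂P = if i = j then 1 else 0)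
    (n : ℕ) (hn : n ≤ w + 1) (c : ℕ → ℝ) (l : ℕ) (hl : l ≤ w) :
    ∫ x, (∑ j ∈ Finset.range n, C (c j) * T j).eval x * (T l).eval x ∂P
      = if l < n then c l else 0 := by
  simp only [Polynomial.eval_finsetSum, Polynomial.eval_mul, Polynomial.eval_C, Finset.sum_mul,
    mul_assoc]
  rw [integral_finsetSum _ fun i _ => (cd_int2 P hP _ _).const_mul _]
  simp only [integral_const_mul]
  have : ∀ i ∈ Finset.range n, c i * ∫ x, (T i).eval x * (T l).eval x ∂P
      = if i = l then c i else 0 := by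
    intro i hi
    rw [horth i (by have := Finset.mem_range.1 hi; omega) l hl]
    simp
  rw [Finset.sum_congr rfl this]
  simp

lemma cd_zero (P : Measure ℝ) (hP : AdmissibleDist P) (T : ℕ → Polynomial ℝ) (w : ℕ)
    (hdeg : ∀ i ≤ w, (T i).natDegree = i)
    (hlead : ∀ i ≤ w, 0 < (T i).leadingCoeff)
    (horth : ∀ i ≤ w, ∀ j ≤ w,
      ∫ x, (T i).eval x * (T j).eval x ∂P = if i = j then 1 else 0)
    (a j : ℕ) (haj : a < j) (hj : j ≤ w) : cdm P T a j = 0 := by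
  obtain ⟨c, hc⟩ := cd_span T w hdeg hlead (a + 1) (X ^ a) (by
    rw [Polynomial.degree_X_pow]; exact_mod_cast Nat.lt_succ_self a) (by omega)
  have := cd_coef P hP T w horth (a + 1) (by omega) c j hj
  rw [← hc, if_neg (by omega)] at this
  simpa [cdm] using this

lemma cd_parseval (P : Measure ℝ) (hP : AdmissibleDist P) (T : ℕ → Polynomial ℝ) (w : ℕ)
    (hdeg : ∀ i ≤ w, (T i).natDegree = i)
    (hlead : ∀ i ≤ w, 0 < (T i).leadingCoeff)
    (horth : ∀ i ≤ w, ∀ j ≤ w,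
      ∫ x, (T i).eval x * (T j).eval x ∂P = if i = j then 1 else 0)
    (a b : ℕ) (ha : a ≤ w) :
    ∫ x, x ^ a * x ^ b ∂P = ∑ j ∈ Finset.range (w + 1), cdm P T a j * cdm P T b j := by
  obtain ⟨c, hc⟩ := cd_span T w hdeg hlead (w + 1) (X ^ a) (by
    rw [Polynomial.degree_X_pow]; exact_mod_cast Nat.lt_succ_of_le ha) le_rfl
  have h1 : ∀ j ∈ Finset.range (w + 1), cdm P T a j = c j := by
    intro j hj
    have hj := Finset.mem_range.1 hj
    have := cd_coef P hP T w horth (w + 1) le_rfl c j (by omega)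
    rw [← hc, if_pos hj] at this
    simpa [cdm] using this
  have h2 : ∀ x : ℝ, x ^ a * x ^ b
      = ∑ j ∈ Finset.range (w + 1), c j * ((X ^ b : ℝ[X]).eval x * (T j).eval x) := by
    intro x
    have := congrArg (Polynomial.eval x) hc
    rw [Polynomial.eval_finsetSum] at this
    simp only [Polynomial.eval_pow, Polynomial.eval_X, Polynomial.eval_mul,
      Polynomial.eval_C] at this
    rw [this, Finset.sum_mul]
    refine Finset.sum_congr rfl fun j _ => ?_
    simp; ring
  simp_rw [h2]
  rw [integral_finsetSum _ fun i _ => (cd_int2 P hP _ _).const_mul _]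
  refine Finset.sum_congr rfl fun j hj => ?_
  rw [integral_const_mul, h1 j hj]
  simp [cdm]

lemma cd_diag (P : Measure ℝ) (hP : AdmissibleDist P) (T : ℕ → Polynomial ℝ) (w : ℕ)
    (hdeg : ∀ i ≤ w, (T i).natDegree = i)
    (hlead : ∀ i ≤ w, 0 < (T i).leadingCoeff)
    (horth : ∀ i ≤ w, ∀ j ≤ w,
      ∫ x, (T i).eval x * (T j).eval x ∂P = if i = j then 1 else 0)
    (b : ℕ) (hb : b ≤ w) : cdm P T b b ≠ 0 := by
  intro h0
  have h1 := horth b hb b hb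
  rw [if_pos rfl] at h1
  have h2 : ∀ x : ℝ, (T b).eval x * (T b).eval x
      = ∑ j ∈ Finset.range (b + 1), (T b).coeff j *
        ((X ^ j : ℝ[X]).eval x * (T b).eval x) := by
    intro x
    have := Polynomial.eval_eq_sum_range (p := T b) x
    rw [hdeg b hb] at this
    nth_rewrite 1 [this]
    rw [Finset.sum_mul]
    refine Finset.sum_congr rfl fun j _ => ?_
    simp; ring
  simp_rw [h2] at h1
  rw [integral_finsetSum _ fun i _ => (cd_int2 P hP _ _).const_mul _,
    Finset.sum_eq_zero] at h1
  · exact zero_ne_one h1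
  · intro j hj
    have hj := Finset.mem_range.1 hj
    rw [integral_const_mul]
    have : ∫ x, (X ^ j : ℝ[X]).eval x * (T b).eval x ∂P = cdm P T j b := by simp [cdm]
    rw [this]
    rcases (Nat.lt_succ_iff.1 hj).eq_or_lt with rfl | h
    · rw [h0, mul_zero]
    · rw [cd_zero P hP T w hdeg hlead horth j b h hb, mul_zero]

end one

lemma cd_Ecoef (P : Measure ℝ) (hP : AdmissibleDist P) (T : ℕ → Polynomial ℝ) {d : ℕ}
    (α β : Fin d → ℕ) : Ecoef P T α β = ∏ i, cdm P T (α i) (β i) := by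
  have := hP.1
  simp only [Ecoef, monom, ← Finset.prod_mul_distrib, piP, cdm]
  exact integral_fintype_prod_eq_prod (𝕜 := ℝ) (μ := fun _ : Fin d => P)
    (fun i x => x ^ α i * (T (β i)).eval x)

lemma cd_cov (P : Measure ℝ) (hP : AdmissibleDist P) (d k : ℕ)
    (T : ℕ → Polynomial ℝ)
    (hdeg : ∀ i ≤ omegaP P k, (T i).natDegree = i)
    (hlead : ∀ i ≤ omegaP P k, 0 < (T i).leadingCoeff)
    (horth : ∀ i ≤ omegaP P k, ∀ j ≤ omegaP P k,
      ∫ x, (T i).eval x * (T j).eval x ∂P = if i = j then 1 else 0)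
    (α β : Fin d → ℕ) (hα : α ∈ multSet P d k) :
    ∫ x, monom α x * monom β x ∂(piP P d)
      = ∑ γ ∈ multSet P d k, Ecoef P T α γ * Ecoef P T β γ := by
  have := hP.1
  simp only [multSet, Finset.mem_filter, Fintype.mem_piFinset, Finset.mem_range] at hα
  obtain ⟨hα1, hα2⟩ := hα
  simp only [monom, ← Finset.prod_mul_distrib, piP]
  rw [integral_fintype_prod_eq_prod (𝕜 := ℝ) (μ := fun _ : Fin d => P)
    (fun i x => x ^ α i * x ^ β i)]
  rw [Finset.prod_congr rfl fun i _ => cd_parseval P hP T (omegaP P k) hdeg hlead horth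
    (α i) (β i) (Nat.lt_succ_iff.1 (hα1 i))]
  rw [Finset.prod_univ_sum]
  simp only [cd_Ecoef P hP, ← Finset.prod_mul_distrib]
  symm
  apply Finset.sum_subset (Finset.filter_subset _ _)
  intro γ hγ hγ'
  have hsum : ¬ ∑ i, γ i ≤ capM P d k := fun h => hγ' (Finset.mem_filter.2 ⟨hγ, h⟩)
  obtain ⟨i, hi⟩ : ∃ i, α i < γ i := by
    by_contra hc
    push Not at hc
    exact hsum ((Finset.sum_le_sum fun i _ => hc i).trans hα2)
  simp only [Fintype.mem_piFinset, Finset.mem_range] at hγ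
  apply Finset.prod_eq_zero (Finset.mem_univ i)
  rw [cd_zero P hP T _ hdeg hlead horth _ _ hi (Nat.lt_succ_iff.1 (hγ i)), zero_mul]

end helpers

/-- Decomposition `Σ = V D Vᵀ` and the resulting extreme eigenvalue
bounds `λ_min(Σ) ≥ (min_α E[X_α T_α]²) σ_min(V)²`,
`λ_max(Σ) ≤ (max_α E[X_α T_α]²) σ_max(V)²`. -/
theorem covariance_decomposition
    (P : Measure ℝ) (hP : AdmissibleDist P) (d k : ℕ)
    (T : ℕ → Polynomial ℝ)
    (hdeg : ∀ i ≤ omegaP P k, (T i).natDegree = i)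
    (hlead : ∀ i ≤ omegaP P k, 0 < (T i).leadingCoeff)
    (horth : ∀ i ≤ omegaP P k, ∀ j ≤ omegaP P k,
      ∫ x, (T i).eval x * (T j).eval x ∂P = if i = j then 1 else 0) :
    covMat P d k = Vmat P T d k * Dmat P T d k * (Vmat P T d k)ᵀ ∧
    sInf {r : ℝ | ∃ a : {α // α ∈ multSet P d k}, r = Ecoef P T a.1 a.1 ^ 2}
        * sigMin (Vmat P T d k) ^ 2
      ≤ lamMin (covMat P d k) ∧
    lamMax (covMat P d k)
      ≤ sSup {r : ℝ | ∃ a : {α // α ∈ multSet P d k}, r = Ecoef P T a.1 a.1 ^ 2}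
          * sigMax (Vmat P T d k) ^ 2 := by
  have hDm : Dmat P T d k = Matrix.diagonal fun a => Ecoef P T a.1 a.1 ^ 2 := by
    ext a b
    simp [Dmat, Matrix.diagonal_apply]
  have h1 : covMat P d k = Vmat P T d k * Dmat P T d k * (Vmat P T d k)ᵀ := by
    rw [hDm]
    ext a b
    rw [Matrix.mul_apply]
    simp only [Matrix.mul_diagonal, Matrix.transpose_apply, Vmat, covMat, Matrix.of_apply]
    rw [cd_cov P hP d k T hdeg hlead horth a.1 b.1 a.2, ← Finset.sum_coe_sort]
    refine Finset.sum_congr rfl fun c _ => ?_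
    have hc : Ecoef P T c.1 c.1 ≠ 0 := by
      rw [cd_Ecoef P hP, Finset.prod_ne_zero_iff]
      intro i _
      have hm := c.2
      simp only [multSet, Finset.mem_filter, Fintype.mem_piFinset, Finset.mem_range] at hm
      exact cd_diag P hP T _ hdeg hlead horth _ (Nat.lt_succ_iff.1 (hm.1 i))
    field_simp
  have : Nonempty {α // α ∈ multSet P d k} := ⟨⟨0, by simp [multSet]⟩⟩
  exact ⟨h1, cd_linalg _ _ _ (fun _ => sq_nonneg _) (by rw [h1, hDm]; congr!)⟩


end
end

section
/- Consider an L-layer neural network of width m* with admissible activation σ (with order of approximation φ_σ) and weights W*, computing f(W*, x), whose weights satisfy ‖a*‖_{ℓ1} ≤ 1 and ‖W*_{k,j}‖_{ℓ1} ≤ 1 for every layer k and row j. Then for every ε > 0 there exists a real polynomial P of degree φ_σ(ε/L) such that the network f̂(W*, x) = (a*)ᵀ P(W*_L P(W*_{L−1} ⋯ P(W*_1 x))⋯), obtained by replacing σ with P everywhere, satisfies sup_{x ∈ [-1,1]^d} |f(W*, x) − f̂(W*, x)| ≤ ε. -/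
open MeasureTheory Polynomial Matrix
open scoped Classical

noncomputable section

lemma aux_sum_bound {n : ℕ} (w v : Fin n → ℝ) (hw : ∑ i, |w i| ≤ 1) (c : ℝ) (hc : 0 ≤ c)
    (hv : ∀ i, |v i| ≤ c) : |∑ i, w i * v i| ≤ c := by
  calc |∑ i, w i * v i| ≤ ∑ i, |w i * v i| := Finset.abs_sum_le_sum_abs _ _
    _ ≤ ∑ i, |w i| * c := Finset.sum_le_sum fun i _ => by
        rw [abs_mul]; exact mul_le_mul_of_nonneg_left (hv i) (abs_nonneg _)
    _ = (∑ i, |w i|) * c := by rw [Finset.sum_mul]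
    _ ≤ 1 * c := mul_le_mul_of_nonneg_right hw hc
    _ = c := one_mul c

lemma aux_layer (σ q : ℝ → ℝ) (hl : LipschitzOnWith 1 σ (Set.Icc (-1) 1))
    (δ : ℝ) (hq : ∀ x ∈ Set.Icc (-1 : ℝ) 1, |q x - σ x| ≤ δ)
    (hs1 : ∀ x ∈ Set.Icc (-1 : ℝ) 1, |σ x| ≤ 1)
    (hq1 : ∀ x ∈ Set.Icc (-1 : ℝ) 1, |q x| ≤ 1)
    {m n : ℕ} (W : Matrix (Fin m) (Fin n) ℝ) (hW : ∀ j, ∑ i, |W j i| ≤ 1)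
    (u v : Fin n → ℝ) (hu : ∀ i, |u i| ≤ 1) (hv : ∀ i, |v i| ≤ 1)
    (c : ℝ) (hc : 0 ≤ c) (huv : ∀ i, |u i - v i| ≤ c) (j : Fin m) :
    |applyLayer σ W u j| ≤ 1 ∧ |applyLayer q W v j| ≤ 1 ∧
      |applyLayer σ W u j - applyLayer q W v j| ≤ c + δ := by
  have h1 := abs_le.mp (aux_sum_bound (W j) u (hW j) 1 zero_le_one hu)
  have h2 := abs_le.mp (aux_sum_bound (W j) v (hW j) 1 zero_le_one hv)
  have h3 := aux_sum_bound (W j) (fun i => u i - v i) (hW j) c hc huv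
  refine ⟨hs1 _ h1, hq1 _ h2, ?_⟩
  have h4 := hl.dist_le_mul _ h1 _ h2
  simp only [Real.dist_eq, NNReal.coe_one, one_mul] at h4
  rw [← Finset.sum_sub_distrib] at h4
  simp only [← mul_sub] at h4
  have h5 := hq _ h2
  unfold applyLayer
  rw [abs_sub_comm] at h5
  calc _ ≤ _ := abs_sub_le _ (σ (∑ i, W j i * v i)) _
    _ ≤ c + δ := add_le_add (h4.trans h3) h5

lemma aux_iter (σ q : ℝ → ℝ) (hl : LipschitzOnWith 1 σ (Set.Icc (-1) 1))
    (δ : ℝ) (hδ : 0 ≤ δ) (hq : ∀ x ∈ Set.Icc (-1 : ℝ) 1, |q x - σ x| ≤ δ)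
    (hs1 : ∀ x ∈ Set.Icc (-1 : ℝ) 1, |σ x| ≤ 1)
    (hq1 : ∀ x ∈ Set.Icc (-1 : ℝ) 1, |q x| ≤ 1)
    {m : ℕ} (u v : Fin m → ℝ)
    (h : ∀ j, |u j| ≤ 1 ∧ |v j| ≤ 1 ∧ |u j - v j| ≤ 0 + δ) (n : ℕ) :
    ∀ (Ws : Fin n → Matrix (Fin m) (Fin m) ℝ) (_ : ∀ p j, ∑ i, |Ws p j i| ≤ 1) (j : Fin m),
    |iterLayers σ n Ws u j| ≤ 1 ∧ |iterLayers q n Ws v j| ≤ 1 ∧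
      |iterLayers σ n Ws u j - iterLayers q n Ws v j| ≤ n * δ + δ := by
  induction n with
  | zero => intro Ws _ j; simpa [iterLayers] using h j
  | succ n ih =>
    intro Ws hWs j
    have ih' := ih (fun i => Ws i.castSucc) (fun p => hWs _)
    have := aux_layer σ q hl δ hq hs1 hq1 (Ws (Fin.last n)) (hWs _) _ _
      (fun i => (ih' i).1) (fun i => (ih' i).2.1) (n * δ + δ) (by positivity)
      (fun i => (ih' i).2.2) j
    refine ⟨this.1, this.2.1, this.2.2.trans (le_of_eq ?_)⟩
    push_cast; ring

/-- Uniform approximation of an admissible-activation network by a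
polynomial network: replacing `σ` by a polynomial `P` of degree `φ_σ(ε/L)` everywhere
changes the output by at most `ε` on `[-1,1]^d`, given unit `ℓ1`-bounded weights. -/
theorem network_polynomial_approximation
    (σ : ℝ → ℝ) (hσ : AdmissibleActivation σ)
    (d m L : ℕ) (hL : 1 ≤ L)
    (a : Fin m → ℝ) (W1 : Matrix (Fin m) (Fin d) ℝ)
    (Ws : Fin (L - 1) → Matrix (Fin m) (Fin m) ℝ)
    (ha : ∑ j, |a j| ≤ 1)
    (hW1 : ∀ j, ∑ i, |W1 j i| ≤ 1)
    (hWs : ∀ p j, ∑ i, |Ws p j i| ≤ 1)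
    (ε : ℝ) (hε : 0 < ε) :
    ∃ Pq : Polynomial ℝ, Pq.natDegree = approxOrder σ (ε / L) ∧
      ∀ x : Fin d → ℝ, (∀ i, x i ∈ Set.Icc (-1 : ℝ) 1) →
        |nnFun σ a W1 Ws x - nnFun (fun y => Pq.eval y) a W1 Ws x| ≤ ε := by
  obtain ⟨-, h2, hl, hs1⟩ := hσ
  have hL0 : (0 : ℝ) < L := by exact_mod_cast hL
  obtain ⟨P, hd, hP, hP1⟩ := h2 (ε / L) (by positivity)
  refine ⟨P, hd, fun x hx => ?_⟩
  have hq1 : ∀ x ∈ Set.Icc (-1 : ℝ) 1, |P.eval x| ≤ 1 := fun x hx =>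
    abs_le.mpr ⟨by linarith [(hP1 x hx).1], (hP1 x hx).2⟩
  have hx' : ∀ i, |x i| ≤ 1 := fun i => abs_le.mpr (hx i)
  have hlay := aux_layer σ (fun y => P.eval y) hl (ε / L) hP hs1 hq1 W1 hW1 x x hx' hx' 0 le_rfl
    (by simp)
  have hit := aux_iter σ (fun y => P.eval y) hl (ε / L) (by positivity) hP hs1 hq1 _ _ hlay
    (L - 1) Ws hWs
  have he : ((L - 1 : ℕ) : ℝ) * (ε / L) + ε / L = ε := by
    rw [Nat.cast_sub hL]; field_simp; simp
  rw [he] at hit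
  unfold nnFun
  rw [← Finset.sum_sub_distrib]
  simp only [← mul_sub]
  exact aux_sum_bound a _ ha ε hε.le fun j => (hit j).2.2

end
end
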